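/- arXiv:1603.06639 — 3 statements merged into one kernel-verified Lean document; each statement's English description precedes it below -/
import Mathlib

section
/- Let R be a commutative Noetherian ring, let I be an ideal, let d be a non-negative integer such that H_I^j(R) = 0 for all j < d, and let q be a prime ideal of R containing I. Then Γ_q(H_I^d(R)) ≅ H_q^d(R), i.e., the q-torsion submodule of H_I^d(R) is isomorphic to the d-th local cohomology of R with support in q. -/
open CategoryTheory Opposite

noncomputable section

/-- The underlying module of the `i`-th local cohomology of `R` with support in `I`. -/
abbrev LocalCohomologyMod (R : Type) [CommRing R] (I : Ideal R) (i : ℕ) : Type :=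
  (localCohomology I i).obj (ModuleCat.of R R)

/-- The `J`-torsion submodule `Γ_J(M) = {m ∈ M | J^k m = 0 for some k}`. -/
def torsionSubmodule (R : Type) [CommRing R] (J : Ideal R)
    (M : Type) [AddCommGroup M] [Module R M] : Submodule R M :=
  ⨆ k : ℕ, Submodule.torsionBySet R M ((J ^ k : Ideal R) : Set R)

/-!
The functor `Γ_J` is `Ideal.primaryComponent`, and `H_J^0 = Γ_J`; hence for `d = 0` the assertion
is `Γ_q (Γ_I M) = Γ_q M`. If `0 < d`, then `Γ_I M = 0`, so `M` embeds in `∏ M_{f_a}` for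
generators `f_a` of `I`. For every ideal `J` containing the `f_a`, all `Ext^n(R ⧸ J ^ t, M_{f_a})`
vanish, since `f_a ^ t` acts on them both as zero and invertibly. The long exact sequence for the
cokernel `Q` of the embedding thus gives `H_J^i(Q) ≅ H_J^{i+1}(M)`, and the cases `J = I` and
`J = q` reduce the assertion for `M` and `d` to that for `Q` and `d - 1`.
-/

open Limits

universe v u

section LeftDerived

variable {C D : Type*} [Category* C] [Category* D] [Abelian C] [Abelian D]

/-- The pointwise application of a short complex of additive functors to chain complexes,
as a short complex of functors; the connecting maps of left derived functors come from it. -/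
def mapChainComplexShortComplex (T : ShortComplex (C ⥤ D))
    [T.X₁.Additive] [T.X₂.Additive] [T.X₃.Additive] :
    ShortComplex (ChainComplex C ℕ ⥤ ChainComplex D ℕ) :=
  ShortComplex.mk (NatTrans.mapHomologicalComplex T.f _) (NatTrans.mapHomologicalComplex T.g _) (by
    ext K i
    exact congr_app T.zero (K.X i))

variable {T : ShortComplex (C ⥤ D)} [T.X₁.Additive] [T.X₂.Additive] [T.X₃.Additive]

lemma shortExact_mapChainComplexShortComplex
    (hT : ∀ (P : C) [Projective P], (T.map ((evaluation C D).obj P)).ShortExact)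
    {X : C} (P : ProjectiveResolution X) :
    ((mapChainComplexShortComplex T).map ((evaluation _ _).obj P.complex)).ShortExact :=
  HomologicalComplex.shortExact_of_degreewise_shortExact _ fun i => hT (P.complex.X i)

/-- The connecting morphism in homology of `0 ⟶ T₁ P ⟶ T₂ P ⟶ T₃ P ⟶ 0` for a projective
resolution `P`, typed so that it can be composed with `ProjectiveResolution.isoLeftDerivedObj`. -/
def homologyConnecting
    (hT : ∀ (P : C) [Projective P], (T.map ((evaluation C D).obj P)).ShortExact)
    {X : C} (P : ProjectiveResolution X) (n : ℕ) :
    (HomologicalComplex.homologyFunctor D _ (n + 1)).obj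
        ((T.X₃.mapHomologicalComplex _).obj P.complex) ⟶
      (HomologicalComplex.homologyFunctor D _ n).obj
        ((T.X₁.mapHomologicalComplex _).obj P.complex) :=
  (shortExact_mapChainComplexShortComplex hT P).δ (n + 1) n (by simp)

lemma homologyConnecting_naturality
    (hT : ∀ (P : C) [Projective P], (T.map ((evaluation C D).obj P)).ShortExact)
    {X Y : C} {P : ProjectiveResolution X} {Q : ProjectiveResolution Y}
    (φ : P.complex ⟶ Q.complex) (n : ℕ) :
    (HomologicalComplex.homologyFunctor D _ (n + 1)).map ((T.X₃.mapHomologicalComplex _).map φ) ≫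
        homologyConnecting hT Q n =
      homologyConnecting hT P n ≫
        (HomologicalComplex.homologyFunctor D _ n).map ((T.X₁.mapHomologicalComplex _).map φ) :=
  (HomologicalComplex.HomologySequence.δ_naturality
    ((mapChainComplexShortComplex T).mapNatTrans ((evaluation _ _).map φ))
    (shortExact_mapChainComplexShortComplex hT P)
    (shortExact_mapChainComplexShortComplex hT Q) (n + 1) n (by simp)).symm

variable [HasProjectiveResolutions C]

/-- The connecting transformation `L_{n+1} T₃ ⟶ L_n T₁` of a sequence `T₁ ⟶ T₂ ⟶ T₃` of additive
functors that is short exact on projective objects. -/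
def leftDerivedConnecting
    (hT : ∀ (P : C) [Projective P], (T.map ((evaluation C D).obj P)).ShortExact) (n : ℕ) :
    T.X₃.leftDerived (n + 1) ⟶ T.X₁.leftDerived n where
  app X := ((projectiveResolution X).isoLeftDerivedObj T.X₃ (n + 1)).hom ≫
    homologyConnecting hT (projectiveResolution X) n ≫
    ((projectiveResolution X).isoLeftDerivedObj T.X₁ n).inv
  naturality X Y f := by
    let P := projectiveResolution X
    let Q := projectiveResolution Y
    let φ : P.complex ⟶ Q.complex := ProjectiveResolution.lift f P Q
    have hφ : φ.f 0 ≫ Q.π.f 0 = P.π.f 0 ≫ f := ProjectiveResolution.lift_commutes_zero f P Q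
    rw [ProjectiveResolution.isoLeftDerivedObj_hom_naturality_assoc f P Q φ hφ, Category.assoc,
      Category.assoc, ProjectiveResolution.isoLeftDerivedObj_inv_naturality f P Q φ hφ,
      reassoc_of% homologyConnecting_naturality hT φ n]
    rfl

lemma isIso_leftDerivedConnecting_app
    (hT : ∀ (P : C) [Projective P], (T.map ((evaluation C D).obj P)).ShortExact) {n : ℕ} {X : C}
    (h : IsZero ((T.X₂.leftDerived n).obj X)) (h' : IsZero ((T.X₂.leftDerived (n + 1)).obj X)) :
    IsIso ((leftDerivedConnecting hT n).app X) := by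
  have : IsIso (homologyConnecting hT (projectiveResolution X) n) :=
    ShortComplex.ShortExact.isIso_δ _ _ _ _
      (h'.of_iso ((projectiveResolution X).isoLeftDerivedObj T.X₂ (n + 1)).symm)
      (h.of_iso ((projectiveResolution X).isoLeftDerivedObj T.X₂ n).symm)
  dsimp only [leftDerivedConnecting]
  infer_instance

lemma leftDerived_natTrans_add {F G : C ⥤ D} [F.Additive] [G.Additive] (α β : F ⟶ G) (n : ℕ) :
    NatTrans.leftDerived (α + β) n = NatTrans.leftDerived α n + NatTrans.leftDerived β n := by
  ext X
  have hadd : (NatTrans.mapHomologicalComplex (α + β) (ComplexShape.down ℕ)).app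
      (projectiveResolution X).complex =
        (NatTrans.mapHomologicalComplex α _).app _ + (NatTrans.mapHomologicalComplex β _).app _ :=
    rfl
  simp only [NatTrans.app_add, ProjectiveResolution.leftDerived_app_eq _ (projectiveResolution X),
    hadd, Functor.map_add, Preadditive.add_comp, Preadditive.comp_add]

lemma leftDerived_map_zero (F : C ⥤ D) [F.Additive] (n : ℕ) (X Y : C) :
    (F.leftDerived n).map (0 : X ⟶ Y) = 0 := by
  rw [F.leftDerived_map_eq n (P := projectiveResolution X) (Q := projectiveResolution Y) 0 0
    (by simp), Functor.map_zero, zero_comp, comp_zero]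

lemma leftDerived_map_app_eq_leftDerived_app {F : C ⥤ D} [F.Additive] (ζ : 𝟭 C ⟶ 𝟭 C) (α : F ⟶ F)
    (h : ∀ X, F.map (ζ.app X) = α.app X) (n : ℕ) (X : C) :
    (F.leftDerived n).map (ζ.app X) = (NatTrans.leftDerived α n).app X := by
  let P := projectiveResolution X
  let φ : P.complex ⟶ P.complex :=
    { f := fun i => ζ.app (P.complex.X i)
      comm' := fun i j _ => (ζ.naturality (P.complex.d i j)).symm }
  have hφ : φ ≫ P.π = P.π ≫ (ChainComplex.single₀ C).map (ζ.app X) := by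
    ext
    change ζ.app (P.complex.X 0) ≫ P.π.f 0 = P.π.f 0 ≫ _
    simpa only [Functor.id_map, ChainComplex.single₀_map_f_zero] using!
      (ζ.naturality (P.π.f 0)).symm
  have hα : (F.mapHomologicalComplex _).map φ =
      (NatTrans.mapHomologicalComplex α _).app P.complex := by
    ext i
    exact h (P.complex.X i)
  rw [F.leftDerived_map_eq n (ζ.app X) φ hφ, P.leftDerived_app_eq, Functor.comp_map, hα]

end LeftDerived

section Ext

variable {R : Type*} [Ring R] {C : Type u} [Category.{v} C] [Abelian C] [Linear R C]

variable (R) in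
/-- The sequence `Hom(-, S₃) ⟶ Hom(-, S₂) ⟶ Hom(-, S₁)` in the opposite of the category of
modules. Its connecting transformation is that of `Ext` in the second variable. -/
def linearYonedaShortComplex (S : ShortComplex C) : ShortComplex (C ⥤ (ModuleCat.{v} R)ᵒᵖ) :=
  ShortComplex.mk (X₁ := ((linearYoneda R C).obj S.X₃).rightOp)
    (X₂ := ((linearYoneda R C).obj S.X₂).rightOp) (X₃ := ((linearYoneda R C).obj S.X₁).rightOp)
    (NatTrans.rightOp ((linearYoneda R C).map S.g))
    (NatTrans.rightOp ((linearYoneda R C).map S.f)) (by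
      ext X
      refine Quiver.Hom.unop_inj (ModuleCat.hom_ext (LinearMap.ext fun (φ : X ⟶ S.X₁) => ?_))
      change (φ ≫ S.f) ≫ S.g = 0
      simp)

lemma shortExact_linearYonedaShortComplex {S : ShortComplex C} (hS : S.ShortExact) (P : C)
    [Projective P] :
    ((linearYonedaShortComplex R S).map ((evaluation _ _).obj P)).ShortExact := by
  have := hS.mono_f
  have := hS.epi_g
  refine (ShortComplex.ShortExact.mk' (S := ((linearYonedaShortComplex R S).map
    ((evaluation _ _).obj P)).unop) ?_ ?_ ?_).op
  · rw [ShortComplex.moduleCat_exact_iff]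
    intro (φ : P ⟶ S.X₂) (hφ : φ ≫ S.g = 0)
    exact ⟨hS.exact.lift φ hφ, hS.exact.lift_f φ hφ⟩
  · rw [ModuleCat.mono_iff_injective]
    exact fun (φ ψ : P ⟶ S.X₁) (h : φ ≫ S.f = ψ ≫ S.f) => (cancel_mono S.f).1 h
  · rw [ModuleCat.epi_iff_surjective]
    exact fun (φ : P ⟶ S.X₃) => ⟨Projective.factorThru φ S.g, Projective.factorThru_comp φ S.g⟩

instance preservesFiniteLimits_linearYoneda_obj (Y : C) :
    PreservesFiniteLimits ((linearYoneda R C).obj Y) :=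
  have : PreservesFiniteLimits ((linearYoneda R C).obj Y ⋙ forget _) :=
    inferInstanceAs (PreservesFiniteLimits (yoneda.obj Y))
  preservesFiniteLimits_of_reflects_of_preserves _ (forget _)

instance (S : ShortComplex C) : (linearYonedaShortComplex R S).X₁.Additive :=
  inferInstanceAs ((linearYoneda R C).obj S.X₃).rightOp.Additive

instance (S : ShortComplex C) : (linearYonedaShortComplex R S).X₂.Additive :=
  inferInstanceAs ((linearYoneda R C).obj S.X₂).rightOp.Additive

instance (S : ShortComplex C) : (linearYonedaShortComplex R S).X₃.Additive :=
  inferInstanceAs ((linearYoneda R C).obj S.X₁).rightOp.Additive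

variable [EnoughProjectives C]

variable (R) in
/-- The connecting transformation `Ext^n(-, S₃) ⟶ Ext^{n+1}(-, S₁)` of a short exact sequence. -/
def extConnecting {S : ShortComplex C} (hS : S.ShortExact) (n : ℕ) :
    (Ext R C n).flip.obj S.X₃ ⟶ (Ext R C (n + 1)).flip.obj S.X₁ :=
  NatTrans.leftOp (leftDerivedConnecting
    (T := linearYonedaShortComplex R S) (fun P _ => shortExact_linearYonedaShortComplex hS P) n)

lemma isIso_extConnecting_app {S : ShortComplex C} (hS : S.ShortExact) {n : ℕ} {X : Cᵒᵖ}
    (h : IsZero (((Ext R C n).obj X).obj S.X₂))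
    (h' : IsZero (((Ext R C (n + 1)).obj X).obj S.X₂)) :
    IsIso ((extConnecting R hS n).app X) :=
  have := isIso_leftDerivedConnecting_app
    (fun P _ => shortExact_linearYonedaShortComplex (R := R) hS P) h.op h'.op
  inferInstanceAs (IsIso ((leftDerivedConnecting
    (fun P _ => shortExact_linearYonedaShortComplex (R := R) hS P) n).app X.unop).unop)

variable (R) in
/-- `Ext⁰(-, Y)` is `Hom(-, Y)`. -/
def extZeroIso (Y : C) : (Ext R C 0).flip.obj Y ≅ (linearYoneda R C).obj Y :=
  have := preservesFiniteColimits_rightOp ((linearYoneda R C).obj Y)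
  ((Functor.leftOpRightOpEquiv _ _).inverse.mapIso
    ((linearYoneda R C).obj Y).rightOp.leftDerivedZeroIsoSelf).symm.unop ≪≫
      Functor.rightOpLeftOpIso _

instance additive_Ext_obj (n : ℕ) (X : Cᵒᵖ) : ((Ext R C n).obj X).Additive where
  map_add {Y Z f g} := by
    have hadd : NatTrans.rightOp ((linearYoneda R C).map (f + g)) =
        NatTrans.rightOp ((linearYoneda R C).map f) +
          NatTrans.rightOp ((linearYoneda R C).map g) := by
      ext W
      refine Quiver.Hom.unop_inj (ModuleCat.hom_ext (LinearMap.ext fun (φ : W ⟶ Y) => ?_))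
      exact Preadditive.comp_add _ _ _ φ f g
    exact congrArg (fun α => (α.app X.unop).unop)
      ((congrArg (NatTrans.leftDerived · n) hadd).trans (leftDerived_natTrans_add _ _ n))

end Ext

lemma isZero_Ext_of_smul_id_eq_zero_of_isIso {R : Type*} [CommRing R] {C : Type u} [Category.{v} C]
    [Abelian C] [Linear R C] [EnoughProjectives C] {X Y : C} (r : R) (hX : r • 𝟙 X = 0)
    (hY : IsIso (r • 𝟙 Y)) (n : ℕ) : IsZero (((Ext R C n).obj (op X)).obj Y) := by
  let F := ((linearYoneda R C).obj Y).rightOp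
  let α : F ⟶ F := NatTrans.rightOp ((linearYoneda R C).map (r • 𝟙 Y))
  have hα (Z : C) : F.map ((r • 𝟙 (𝟭 C)).app Z) = α.app Z := by
    refine Quiver.Hom.unop_inj (ModuleCat.hom_ext (LinearMap.ext fun (φ : Z ⟶ Y) => ?_))
    change (r • 𝟙 Z) ≫ φ = φ ≫ (r • 𝟙 Y)
    simp
  have hzero : (NatTrans.leftDerived α n).app X = 0 := by
    rw [← leftDerived_map_app_eq_leftDerived_app _ α hα]
    change (F.leftDerived n).map (r • 𝟙 X) = 0
    rw [hX, leftDerived_map_zero]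
  have hmap : ((Ext R C n).obj (op X)).map (r • 𝟙 Y) = 0 := congrArg Quiver.Hom.unop hzero
  exact IsZero.of_epi_eq_zero _ hmap

section PrimaryComponent

variable {R : Type*} [CommRing R] {M N : Type*} [AddCommGroup M] [Module R M]
  [AddCommGroup N] [Module R N]

lemma mem_primaryComponent_iff {J : Ideal R} {m : M} :
    m ∈ Ideal.primaryComponent M J ↔ ∃ n, ∀ r ∈ J ^ n, r • m = 0 := by
  simp [Ideal.primaryComponent_mem, Submodule.mem_torsionBySet_iff]

variable (M) in
lemma antitone_primaryComponent : Antitone fun J : Ideal R => Ideal.primaryComponent M J :=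
  fun _ _ h _ hm =>
  have ⟨n, hn⟩ := mem_primaryComponent_iff.1 hm
  mem_primaryComponent_iff.2 ⟨n, fun r hr => hn r (Ideal.pow_right_mono h n hr)⟩

lemma bijective_primaryComponent_map {J : Ideal R} {φ : M →ₗ[R] N} (hφ : Function.Injective φ)
    (hJ : Ideal.primaryComponent N J ≤ LinearMap.range φ) :
    Function.Bijective (Ideal.primaryComponent.map J φ) := by
  refine ⟨fun x y h => Subtype.ext (hφ (congrArg Subtype.val h)), fun ⟨y, hy⟩ => ?_⟩
  obtain ⟨x, rfl⟩ := hJ hy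
  obtain ⟨n, hn⟩ := mem_primaryComponent_iff.1 hy
  refine ⟨⟨x, mem_primaryComponent_iff.2 ⟨n, fun r hr => hφ ?_⟩⟩, rfl⟩
  rw [map_smul, hn r hr, map_zero]

/-- Isomorphic modules have isomorphic `J`-torsion submodules. -/
def primaryComponentCongr (J : Ideal R) (e : M ≃ₗ[R] N) :
    Ideal.primaryComponent M J ≃ₗ[R] Ideal.primaryComponent N J :=
  .ofBijective _ (bijective_primaryComponent_map e.injective (LinearEquiv.range e ▸ le_top))

variable (M) in
/-- `Γ_J (Γ_I M) ≅ Γ_J M` for `I ≤ J`. -/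
def primaryComponentPrimaryComponentEquiv {I J : Ideal R} (h : I ≤ J) :
    Ideal.primaryComponent (Ideal.primaryComponent M I) J ≃ₗ[R] Ideal.primaryComponent M J :=
  .ofBijective _ (bijective_primaryComponent_map (Submodule.subtype_injective _)
    ((antitone_primaryComponent M h).trans_eq (Submodule.range_subtype _).symm))

end PrimaryComponent

/-- A cocone of modules with injective and jointly surjective legs is a colimit cocone. -/
def isColimitOfInjective {A : Type*} [Category* A] {R : Type*} [Ring R]
    {F : A ⥤ ModuleCat.{u} R} [HasColimit F] [PreservesColimit F (forget (ModuleCat.{u} R))]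
    (c : Cocone F) (hinj : ∀ a, Function.Injective (c.ι.app a))
    (hsurj : ∀ x : c.pt, ∃ a y, c.ι.app a y = x) :
    IsColimit c :=
  have hdesc (a : A) (y : F.obj a) : colimit.desc F c (colimit.ι F a y) = c.ι.app a y :=
    ConcreteCategory.congr_hom (colimit.ι_desc c a) y
  have : IsIso ((colimit.isColimit F).desc c) := by
    refine (ConcreteCategory.isIso_iff_bijective _).2 ⟨?_, fun x => ?_⟩
    · refine (injective_iff_map_eq_zero (colimit.desc F c).hom).2 fun x hx => ?_
      obtain ⟨a, y, rfl⟩ := Concrete.colimit_exists_rep F x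
      have hy : c.ι.app a y = 0 := (hdesc a y).symm.trans hx
      rw [hinj a (hy.trans (map_zero _).symm), map_zero]
    · obtain ⟨a, y, rfl⟩ := hsurj x
      exact ⟨_, hdesc a y⟩
  (colimit.isColimit F).ofPointIso

lemma isZero_obj_biproduct {C D : Type*} [Category* C] [Category* D] [Preadditive C]
    [Preadditive D] (F : C ⥤ D) [F.Additive] {ι : Type} [Finite ι] (Y : ι → C) [HasBiproduct Y]
    (h : ∀ i, IsZero (F.obj (Y i))) : IsZero (F.obj (⨁ Y)) := by
  have := Fintype.ofFinite ι
  rw [IsZero.iff_id_eq_zero, ← F.map_id, ← biproduct.total (f := Y), F.map_sum]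
  refine Finset.sum_eq_zero fun i _ => ?_
  rw [F.map_comp, (h i).eq_of_src (F.map (biproduct.ι Y i)) 0, comp_zero]

section LocalCohomology

variable {R : Type u} [CommRing R]

lemma isZero_Ext_quotient_of_bijective_smul {K : Ideal R} {r : R} (hr : r ∈ K) {N : ModuleCat.{u} R}
    (hN : Function.Bijective fun x : N => r • x) (n : ℕ) :
    IsZero (((Ext R (ModuleCat.{u} R) n).obj (op (ModuleCat.of R (R ⧸ K)))).obj N) := by
  refine isZero_Ext_of_smul_id_eq_zero_of_isIso r ?_ ?_ n
  · ext
    exact (Submodule.Quotient.mk_eq_zero K).2 (K.mul_mem_right 1 hr)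
  · exact (ConcreteCategory.isIso_iff_bijective _).2 hN

/-- The product of the localizations of `M` at the powers of the elements of a family `f`. -/
abbrev piLocalizedModule {ι : Type} (f : ι → R) (M : ModuleCat.{u} R) : ModuleCat.{u} R :=
  ModuleCat.of R (Π a, LocalizedModule (Submonoid.powers (f a)) M)

lemma isZero_Ext_quotient_pow_piLocalizedModule {J : Ideal R} {ι : Type} [Finite ι] {f : ι → R}
    (hf : ∀ a, f a ∈ J) (M : ModuleCat.{u} R) (t n : ℕ) :
    IsZero (((Ext R (ModuleCat.{u} R) n).obj (op (ModuleCat.of R (R ⧸ J ^ t)))).obj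
      (piLocalizedModule f M)) := by
  refine IsZero.of_iso (isZero_obj_biproduct _ _ fun a => ?_) (Functor.mapIso _
    (ModuleCat.biproductIsoPi fun a => ModuleCat.of R
      (LocalizedModule (Submonoid.powers (f a)) M)).symm)
  refine isZero_Ext_quotient_of_bijective_smul (Ideal.pow_mem_pow (hf a) t) ?_ n
  exact (Module.End.isUnit_iff _).1 (IsLocalizedModule.map_units
    (LocalizedModule.mkLinearMap (Submonoid.powers (f a)) M)
    (⟨f a ^ t, t, rfl⟩ : Submonoid.powers (f a)))

/-- The product of the localization maps from `M`. -/
def toPiLocalizedModule {ι : Type} (f : ι → R) (M : ModuleCat.{u} R) : M ⟶ piLocalizedModule f M :=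
  ModuleCat.ofHom (LinearMap.pi fun a => LocalizedModule.mkLinearMap (Submonoid.powers (f a)) M)

lemma ker_toPiLocalizedModule_le {ι : Type} [Finite ι] (f : ι → R) (M : ModuleCat.{u} R) :
    LinearMap.ker (toPiLocalizedModule f M).hom ≤
      Ideal.primaryComponent M (Ideal.span (Set.range f)) := by
  intro m hm
  have hrad : Ideal.span (Set.range f) ≤
      Ideal.radical (LinearMap.ker (LinearMap.toSpanSingleton R M m)) := by
    rw [Ideal.span_le, Set.range_subset_iff]
    intro a
    have hma : LocalizedModule.mkLinearMap (Submonoid.powers (f a)) M m = 0 := congrFun hm a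
    obtain ⟨⟨_, n, rfl⟩, hn⟩ := (IsLocalizedModule.eq_zero_iff (Submonoid.powers (f a)) _).1 hma
    exact ⟨n, hn⟩
  obtain ⟨n, hn⟩ := Ideal.exists_pow_le_of_le_radical_of_fg hrad
    (Submodule.fg_span (Set.finite_range f))
  exact mem_primaryComponent_iff.2 ⟨n, hn⟩

/-- The inverse system of the `R ⧸ J ^ t`, over which local cohomology at `J` is a colimit. -/
def quotientPowers (J : Ideal R) : ℕᵒᵖᵒᵖ ⥤ (ModuleCat.{u} R)ᵒᵖ :=
  (localCohomology.ringModIdeals (localCohomology.idealPowersDiagram J)).op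

/-- `localCohomology` is defined as a colimit of functors; its values are the colimits of the
modules `Ext^i(R ⧸ J ^ t, M)`. -/
def localCohomologyObjIso (J : Ideal R) (i : ℕ) (M : ModuleCat.{u} R) :
    (localCohomology J i).obj M ≅
      colimit (quotientPowers J ⋙ (Ext R (ModuleCat.{u} R) i).flip.obj M) :=
  colimitObjIsoColimitCompEvaluation (quotientPowers J ⋙ Ext R (ModuleCat.{u} R) i) M

/-- The dimension shift `H_J^i(S₃) ≅ H_J^{i+1}(S₁)` of a short exact sequence whose middle term has
no `Ext` from the `R ⧸ J ^ t` in degrees `i` and `i + 1`. -/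
def localCohomologyShiftIso {S : ShortComplex (ModuleCat.{u} R)} (hS : S.ShortExact) (J : Ideal R)
    {i : ℕ}
    (h : ∀ t, IsZero (((Ext R (ModuleCat.{u} R) i).obj
      (op (ModuleCat.of R (R ⧸ J ^ t)))).obj S.X₂))
    (h' : ∀ t, IsZero (((Ext R (ModuleCat.{u} R) (i + 1)).obj
      (op (ModuleCat.of R (R ⧸ J ^ t)))).obj S.X₂)) :
    (localCohomology J i).obj S.X₃ ≅ (localCohomology J (i + 1)).obj S.X₁ :=
  have (t : ℕᵒᵖᵒᵖ) :
      IsIso ((Functor.whiskerLeft (quotientPowers J) (extConnecting R hS i)).app t) :=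
    isIso_extConnecting_app hS (h t.unop.unop) (h' t.unop.unop)
  have := NatIso.isIso_of_isIso_app
    (Functor.whiskerLeft (quotientPowers J) (extConnecting R hS i))
  localCohomologyObjIso J i S.X₃ ≪≫
    HasColimit.isoOfNatIso (asIso (Functor.whiskerLeft (quotientPowers J)
      (extConnecting R hS i))) ≪≫ (localCohomologyObjIso J (i + 1) S.X₁).symm

/-- Evaluation at `1` maps the modules `Hom(R ⧸ J ^ t, M)` to the `J`-torsion of `M`. -/
def quotientPowersHomCocone (J : Ideal R) (M : ModuleCat.{u} R) :
    Cocone (quotientPowers J ⋙ (linearYoneda R (ModuleCat.{u} R)).obj M) where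
  pt := ModuleCat.of R (Ideal.primaryComponent M J)
  ι :=
    { app t := ModuleCat.ofHom
        { toFun (φ : ModuleCat.of R (R ⧸ J ^ t.unop.unop) ⟶ M) :=
            ⟨φ.hom (Submodule.Quotient.mk 1), mem_primaryComponent_iff.2
              ⟨t.unop.unop, fun r hr => by
                rw [← map_smul, ← Submodule.Quotient.mk_smul, smul_eq_mul, mul_one,
                  (Submodule.Quotient.mk_eq_zero _).2 hr, map_zero]⟩⟩
          map_add' _ _ := rfl
          map_smul' _ _ := rfl }
      naturality _ _ _ := rfl }

/-- The `J`-torsion of `M` is the colimit of the modules `Hom(R ⧸ J ^ t, M)`. -/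
def isColimitQuotientPowersHomCocone (J : Ideal R) (M : ModuleCat.{u} R) :
    IsColimit (quotientPowersHomCocone J M) := by
  have := preservesSmallestFilteredColimits_of_preservesFilteredColimits
    (forget (ModuleCat.{u} R))
  refine isColimitOfInjective _ (fun t φ ψ h => ?_) fun ⟨m, hm⟩ => ?_
  · change ModuleCat.of R (R ⧸ J ^ t.unop.unop) ⟶ M at φ ψ
    change φ = ψ
    ext
    exact congrArg Subtype.val h
  · obtain ⟨t, ht⟩ := mem_primaryComponent_iff.1 hm
    let φ : ModuleCat.of R (R ⧸ J ^ t) ⟶ M := ModuleCat.ofHom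
      (Submodule.liftQ (J ^ t) (LinearMap.toSpanSingleton R M m) ht)
    exact ⟨op (op t), φ, Subtype.ext (one_smul R m)⟩

/-- `H_J^0(M)` is the `J`-torsion of `M`. -/
def localCohomologyZeroIso (J : Ideal R) (M : ModuleCat.{u} R) :
    (localCohomology J 0).obj M ≅ ModuleCat.of R (Ideal.primaryComponent M J) :=
  localCohomologyObjIso J 0 M ≪≫
    HasColimit.isoOfNatIso (Functor.isoWhiskerLeft (quotientPowers J) (extZeroIso R M)) ≪≫
      colimit.isoColimitCocone ⟨_, isColimitQuotientPowersHomCocone J M⟩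

lemma mono_toPiLocalizedModule {ι : Type} [Finite ι] {f : ι → R} {M : ModuleCat.{u} R}
    (h : Subsingleton ((localCohomology (Ideal.span (Set.range f)) 0).obj M)) :
    Mono (toPiLocalizedModule f M) := by
  have : Subsingleton (Ideal.primaryComponent M (Ideal.span (Set.range f))) :=
    (localCohomologyZeroIso _ M).toLinearEquiv.symm.injective.subsingleton
  rw [ModuleCat.mono_iff_ker_eq_bot, eq_bot_iff]
  exact (ker_toPiLocalizedModule_le f M).trans (Submodule.subsingleton_iff_eq_bot.1 this).le

/-- If `M` embeds in the product of its localizations at a finite family `f` with cokernel `Q`,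
then `H_J^i(Q) ≅ H_J^{i+1}(M)` for every ideal `J` containing the family. -/
def localCohomologyCokernelIso {ι : Type} [Finite ι] (f : ι → R) (M : ModuleCat.{u} R)
    [Mono (toPiLocalizedModule f M)] {J : Ideal R} (hf : ∀ a, f a ∈ J) (i : ℕ) :
    (localCohomology J i).obj (cokernel (toPiLocalizedModule f M)) ≅
      (localCohomology J (i + 1)).obj M :=
  localCohomologyShiftIso (S := ShortComplex.mk _ _ (cokernel.condition (toPiLocalizedModule f M)))
    (.mk' (ShortComplex.exact_cokernel _) inferInstance inferInstance) J
    (fun t => isZero_Ext_quotient_pow_piLocalizedModule hf M t i)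
    (fun t => isZero_Ext_quotient_pow_piLocalizedModule hf M t (i + 1))

theorem stmt12_general {R : Type u} [CommRing R] {I q : Ideal R} (hI : I.FG) (hIq : I ≤ q) (d : ℕ)
    (M : ModuleCat.{u} R) (hvan : ∀ j < d, Subsingleton ((localCohomology I j).obj M)) :
    Nonempty (Ideal.primaryComponent ((localCohomology I d).obj M) q ≃ₗ[R]
      (localCohomology q d).obj M) := by
  obtain ⟨n, f, rfl⟩ := Submodule.fg_iff_exists_fin_generating_family.1 hI
  have hf (a : Fin n) : f a ∈ Ideal.span (Set.range f) := Ideal.subset_span ⟨a, rfl⟩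
  induction d generalizing M with
  | zero =>
    exact ⟨primaryComponentCongr q (localCohomologyZeroIso _ M).toLinearEquiv ≪≫ₗ
      primaryComponentPrimaryComponentEquiv M hIq ≪≫ₗ
        (localCohomologyZeroIso q M).toLinearEquiv.symm⟩
  | succ d ih =>
    have : Mono (toPiLocalizedModule f M) := mono_toPiLocalizedModule (hvan 0 d.succ_pos)
    obtain ⟨e⟩ := ih (cokernel (toPiLocalizedModule f M)) fun j hj =>
      have := hvan (j + 1) (Nat.succ_lt_succ hj)
      (localCohomologyCokernelIso f M hf j).toLinearEquiv.injective.subsingleton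
    exact ⟨primaryComponentCongr q (localCohomologyCokernelIso f M hf d).toLinearEquiv.symm ≪≫ₗ
      e ≪≫ₗ (localCohomologyCokernelIso f M (fun a => hIq (hf a)) d).toLinearEquiv⟩

end LocalCohomology

/-- `R` Noetherian, `I` an ideal with `H_I^j(R) = 0` for `j < d`, and `q` a
prime containing `I`.  Then `Γ_q(H_I^d(R)) ≅ H_q^d(R)`. -/
theorem stmt12 (R : Type) [CommRing R] [IsNoetherianRing R]
    (I : Ideal R) (d : ℕ)
    (hvan : ∀ j < d, Subsingleton (LocalCohomologyMod R I j))
    (q : Ideal R) [q.IsPrime] (hq : I ≤ q) :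
    Nonempty
      ((torsionSubmodule R q (LocalCohomologyMod R I d)) ≃ₗ[R] LocalCohomologyMod R q d) :=
  stmt12_general (IsNoetherian.noetherian I) hq d _ hvan

end
end

section
/- Let (R, m) be a regular local ring of dimension n, let p be a prime ideal of R with ht_R(p) ≤ n − 2, and let h ∈ R ∖ p. Then Hom_R(R/p, E_R(R/p))_h is not a finitely generated R_h-module. -/
open CategoryTheory Opposite

noncomputable section

/-- Krull dimension of the support of a module. -/
def moduleSuppDim (R : Type) [CommRing R] (M : Type) [AddCommGroup M] [Module R M] :
    WithBot ℕ∞ :=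
  Order.krullDim (Module.support R M)

/-- `M` has injective dimension at most `n` (as `R`-module), characterized by
vanishing of `Ext^i(N, M)` for all `i > n`. -/
def injDimLE (R : Type) [CommRing R] (M : Type) [AddCommGroup M] [Module R M] (n : ℕ) : Prop :=
  ∀ (N : ModuleCat R) (i : ℕ), n < i →
    Subsingleton (((Ext R (ModuleCat R) i).obj (op N)).obj (ModuleCat.of R M))

/-- The injective dimension of `M` as an `R`-module, valued in `ℕ∞`. -/
def injDim (R : Type) [CommRing R] (M : Type) [AddCommGroup M] [Module R M] : ℕ∞ :=
  sInf {n : ℕ∞ | ∃ m : ℕ, (m : ℕ∞) = n ∧ injDimLE R M m}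

/-- The height of an ideal: the infimum of the heights of primes containing it. -/
def idealHeight (R : Type) [CommRing R] (I : Ideal R) : ℕ∞ :=
  sInf {h : ℕ∞ | ∃ p : PrimeSpectrum R, I ≤ p.asIdeal ∧ Order.height p = h}

/-- A regular local ring: a Noetherian local ring whose maximal ideal can be generated
by `dim R` elements. -/
def IsRegularLocal (R : Type) [CommRing R] [IsLocalRing R] : Prop :=
  IsNoetherianRing R ∧
    ∃ s : Finset R, Ideal.span (s : Set R) = IsLocalRing.maximalIdeal R ∧
      (s.card : WithBot ℕ∞) = ringKrullDim R

/-- A ring contains a field if some subring of it is a field. -/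
def ContainsField (R : Type) [CommRing R] : Prop :=
  ∃ k : Subring R, IsField k

end
/-- `f : M →ₗ[R] E` presents `E` as an injective hull (injective envelope) of `M`:
`E` is injective, `f` is injective, and the image of `f` is an essential submodule of `E`. -/
def IsInjectiveHull (R : Type) [CommRing R] {M E : Type} [AddCommGroup M] [Module R M]
    [AddCommGroup E] [Module R E] (f : M →ₗ[R] E) : Prop :=
  Module.Injective R E ∧ Function.Injective f ∧
    ∀ N : Submodule R E, N ≠ ⊥ → N ⊓ LinearMap.range f ≠ ⊥

/-!
Let `q ⊋ p` be a prime with `h ∉ q` and let `y ∈ q \ p`. As `y` is regular on `R ⧸ p` and `E` is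
injective, multiplication by `y` is onto on `Hom(R ⧸ p, E)`, hence on its localization `N` at `h`.
If `N` were finite over `R_h`, Nakayama would give `(y) + Ann N = R_h`; but an embedding `R ⧸ p → E`
has annihilator `p`, so that `(y) + Ann N ⊆ q R_h ≠ R_h`.

Such a `q` exists as soon as `dim R ⧸ p > 1`: if the nonzero image of `h` lay in all nonzero primes
of `R ⧸ p`, then the finitely many minimal primes over it would cover every prime, and so every
prime would have height at most `1`.

Finally, `dim R ≤ dim R ⧸ p + ht p` because a regular local ring is Cohen–Macaulay. Start with
`M = R` and divide out elements of `p` regular on `M` for as long as there are any: at most `ht p`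
steps are possible, each lowers the depth by one, and at the end `p` lies in an associated prime of
`M`, so that the remaining depth is at most `dim R ⧸ p`.
-/

open IsLocalRing RingTheory.Sequence Pointwise

universe u v

section Localization

variable {R : Type*} [CommRing R] {M : Type*} [AddCommGroup M] [Module R M]

theorem span_singleton_sup_annihilator_eq_top [Module.Finite R M] {y : R}
    (hy : Function.Surjective (y • · : M → M)) :
    Ideal.span {y} ⊔ Module.annihilator R M = ⊤ := by
  have hle : (⊤ : Submodule R M) ≤ Ideal.span {y} • ⊤ := fun m _ ↦ by
    obtain ⟨m, rfl⟩ := hy m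
    exact Submodule.smul_mem_smul (Ideal.mem_span_singleton_self y) Submodule.mem_top
  obtain ⟨r, hr, hrM⟩ :=
    Submodule.exists_sub_one_mem_and_smul_eq_zero_of_fg_of_le_smul _ ⊤ Module.Finite.fg_top hle
  have hann : r ∈ Module.annihilator R M :=
    Module.mem_annihilator.mpr fun m ↦ hrM m Submodule.mem_top
  rw [Ideal.eq_top_iff_one, ← sub_sub_cancel r 1]
  exact sub_mem (Ideal.mem_sup_right hann) (Ideal.mem_sup_left hr)

theorem not_finite_of_isLocalizedModule (S : Submonoid R) (A : Type*) [CommRing A] [Algebra R A]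
    [IsLocalization S A] {N : Type*} [AddCommGroup N] [Module R N] [Module A N]
    [IsScalarTower R A N] (g : M →ₗ[R] N) [IsLocalizedModule S g] {q : Ideal R} [q.IsPrime]
    (hS : Disjoint (S : Set R) q) {y : R} (hyq : y ∈ q)
    (hy : Function.Surjective (y • · : M → M)) {m : M} (hm : ∀ r : R, r • m = 0 → r ∈ q) :
    ¬ Module.Finite A N := by
  intro _
  have hsurj : Function.Surjective (algebraMap R A y • · : N → N) := fun z ↦ by
    obtain ⟨⟨m, s⟩, rfl⟩ := IsLocalizedModule.mk'_surjective S g z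
    obtain ⟨m', rfl⟩ := hy m
    exact ⟨IsLocalizedModule.mk' g m' s, by simp [← IsLocalizedModule.mk'_smul]⟩
  have hann : Module.annihilator A N ≤ q.map (algebraMap R A) := fun a ha ↦ by
    obtain ⟨r, s, rfl⟩ := IsLocalization.exists_mk'_eq S a
    have hr : g (r • m) = 0 := by
      rw [map_smul, ← algebraMap_smul A, ← IsLocalization.mk'_spec' A r s, mul_smul,
        Module.mem_annihilator.mp ha, smul_zero]
    obtain ⟨t, ht⟩ := (IsLocalizedModule.eq_zero_iff S g).mp hr
    have htr : (t : R) * r ∈ q := hm _ (by rwa [mul_smul])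
    have htq : (t : R) ∉ q := Set.disjoint_left.mp hS t.2
    rw [IsLocalization.mk'_mem_iff]
    exact Ideal.mem_map_of_mem _ ((Ideal.IsPrime.mem_or_mem ‹_› htr).resolve_left htq)
  have hq : (q.map (algebraMap R A)).IsPrime :=
    IsLocalization.isPrime_of_isPrime_disjoint S A q ‹_› hS
  refine hq.ne_top (top_le_iff.mp ?_)
  rw [← span_singleton_sup_annihilator_eq_top hsurj]
  exact sup_le (by simpa using Ideal.mem_map_of_mem _ hyq) hann

end Localization

section InjectiveModule

theorem smul_surjective_linearMap_of_isSMulRegular {R : Type u} [CommRing R] {N : Type*}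
    [AddCommGroup N] [Module R N] {E : Type v} [AddCommGroup E] [Module R E] [Small.{v} R]
    [Module.Injective R E] {y : R} (hy : IsSMulRegular N y) :
    Function.Surjective (y • · : (N →ₗ[R] E) → (N →ₗ[R] E)) := fun g ↦ by
  obtain ⟨g', rfl⟩ := Module.Injective.extension_property R E N N (LinearMap.lsmul R N y) hy g
  exact ⟨g', LinearMap.ext fun n ↦ (map_smul g' y n).symm⟩

theorem isSMulRegular_quotient_of_notMem {R : Type*} [CommRing R] {p : Ideal R} [p.IsPrime]
    {y : R} (hy : y ∉ p) : IsSMulRegular (R ⧸ p) y := by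
  rw [isSMulRegular_quotient_iff_mem_of_smul_mem]
  exact fun x hx ↦ (Ideal.IsPrime.mem_or_mem ‹_› hx).resolve_left hy

theorem not_finite_localizedModule_linearMap_of_lt {R : Type u} [CommRing R] {p q : Ideal R}
    [p.IsPrime] [q.IsPrime] (hpq : p < q) {S : Submonoid R} (hS : Disjoint (S : Set R) q)
    {E : Type v} [AddCommGroup E] [Module R E] [Small.{v} R] [Module.Injective R E]
    {f : (R ⧸ p) →ₗ[R] E} (hf : Function.Injective f) :
    ¬ Module.Finite (Localization S) (LocalizedModule S ((R ⧸ p) →ₗ[R] E)) := by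
  obtain ⟨y, hyq, hyp⟩ := SetLike.exists_of_lt hpq
  refine not_finite_of_isLocalizedModule S _ (LocalizedModule.mkLinearMap S _) hS hyq
    (smul_surjective_linearMap_of_isSMulRegular (isSMulRegular_quotient_of_notMem hyp))
    (m := f) fun r hr ↦ hpq.le ?_
  have hr1 : f (Ideal.Quotient.mk p r) = f 0 := by
    simpa [← map_smul, Algebra.smul_def] using LinearMap.congr_fun hr 1
  exact Ideal.Quotient.eq_zero_iff_mem.mp (hf hr1)

end InjectiveModule

section PrimeIdeals

theorem ringKrullDim_quotient_add_one_le_of_lt {R : Type*} [CommRing R] {p q : Ideal R}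
    [p.IsPrime] (hpq : p < q) : ringKrullDim (R ⧸ q) + 1 ≤ ringKrullDim (R ⧸ p) := by
  obtain ⟨x, hxq, hxp⟩ := SetLike.exists_of_lt hpq
  exact ringKrullDim_succ_le_of_surjective (Ideal.Quotient.factor hpq.le)
    (Ideal.Quotient.factor_surjective hpq.le) (r := Ideal.Quotient.mk p x)
    (by rwa [mem_nonZeroDivisors_iff_ne_zero, Ne, Ideal.Quotient.eq_zero_iff_mem])
    (by rwa [Ideal.Quotient.factor_mk, Ideal.Quotient.eq_zero_iff_mem])

variable {R : Type*} [CommRing R] [IsNoetherianRing R]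

theorem ringKrullDim_le_one_of_forall_mem [IsDomain R] {h : R} (hh : h ≠ 0)
    (hmem : ∀ q : Ideal R, q.IsPrime → q ≠ ⊥ → h ∈ q) : ringKrullDim R ≤ 1 := by
  refine (ringKrullDim_le_iff_height_le 1).mpr fun P _ ↦ ?_
  obtain rfl | hPbot := eq_or_ne P ⊥
  · simp
  have exists_minimalPrimes_le {z : R} {Q : Ideal R} [Q.IsPrime] (hz : z ∈ Q) :
      ∃ q ∈ (Ideal.span {z}).minimalPrimes, q ≤ Q :=
    Ideal.exists_minimalPrimes_le ((Q.span_singleton_le_iff_mem).mpr hz)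
  have hcover : (P : Set R) ⊆ ⋃ r ∈ (Ideal.span {h}).minimalPrimes, (r : Set R) := fun y hyP ↦ by
    rw [Set.mem_iUnion₂]
    obtain rfl | hy := eq_or_ne y 0
    · obtain ⟨r, hr, -⟩ := exists_minimalPrimes_le (hmem P ‹_› hPbot)
      exact ⟨r, hr, r.zero_mem⟩
    obtain ⟨q, hq, -⟩ := exists_minimalPrimes_le hyP
    have := hq.isPrime
    have hyq : y ∈ q := hq.1.2 (Ideal.mem_span_singleton_self y)
    obtain ⟨r, hr, hrq⟩ :=
      exists_minimalPrimes_le (hmem q ‹_› (Submodule.ne_bot_iff _ |>.mpr ⟨y, hyq, hy⟩))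
    have := hr.isPrime
    have hr0 : r ≠ ⊥ :=
      (Submodule.ne_bot_iff _).mpr ⟨h, hr.1.2 (Ideal.mem_span_singleton_self h), hh⟩
    have hheight : q.height ≤ r.height :=
      (Ideal.height_le_one_of_isPrincipal_of_mem_minimalPrimes _ q hq).trans
        (Order.one_le_iff_ne_zero.mpr (Ideal.height_eq_zero_iff_eq_bot.not.mpr hr0))
    exact ⟨r, hr, Ideal.eq_of_le_of_height_le _ hrq hheight ▸ hyq⟩
  obtain ⟨r, hr, hPr⟩ := (Ideal.subset_union_prime_finite (f := id)
    (Ideal.finite_minimalPrimes_of_isNoetherianRing R (Ideal.span {h})) ⊥ ⊥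
    fun r hr _ _ ↦ hr.isPrime).mp hcover
  exact_mod_cast (Ideal.height_mono hPr).trans
    (Ideal.height_le_one_of_isPrincipal_of_mem_minimalPrimes _ r hr)

theorem exists_isPrime_gt_notMem {p : Ideal R} [p.IsPrime] (hp : 1 < ringKrullDim (R ⧸ p))
    {h : R} (hh : h ∉ p) : ∃ q : Ideal R, q.IsPrime ∧ p < q ∧ h ∉ q := by
  by_contra! hmem
  refine hp.not_ge (ringKrullDim_le_one_of_forall_mem (h := Ideal.Quotient.mk p h)
    (by rwa [Ne, Ideal.Quotient.eq_zero_iff_mem]) fun q hq hbot ↦ ?_)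
  refine hmem (q.comap (Ideal.Quotient.mk p)) (hq.comap _) ?_
  have hlt := (Ideal.comap_injective_of_surjective _ Ideal.Quotient.mk_surjective).ne hbot.symm
  rw [← RingHom.ker_eq_comap_bot, Ideal.mk_ker] at hlt
  exact hlt.lt_of_le fun a ha ↦ by simp [Ideal.Quotient.eq_zero_iff_mem.mpr ha]

end PrimeIdeals

section AssociatedPrimes

variable {R : Type*} [CommRing R] {M : Type*} [AddCommGroup M] [Module R M]

theorem exists_mem_torsionBySet_notMem_smul_top [IsLocalRing R] [IsNoetherian R M] {s : Set R}
    (hs : Submodule.torsionBySet R M s ≠ ⊥) {x : R} (hxm : x ∈ maximalIdeal R)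
    (hx : IsSMulRegular M x) : ∃ m ∈ Submodule.torsionBySet R M s, m ∉ x • (⊤ : Submodule R M) := by
  by_contra! hle
  refine hs (Submodule.eq_bot_of_eq_pointwise_smul_of_mem_jacobson_annihilator
    (IsNoetherian.noetherian _) (le_antisymm (fun m hm ↦ ?_) (Submodule.smul_le_self_of_tower _ _))
    (maximalIdeal_le_jacobson _ hxm))
  obtain ⟨m, -, rfl⟩ := Submodule.mem_smul_pointwise_iff_exists m x ⊤ |>.mp (hle m hm)
  refine Submodule.smul_mem_pointwise_smul m x _
    ((Submodule.mem_torsionBySet_iff _ _).mpr fun a ↦ hx ?_)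
  simpa [smul_comm x] using (Submodule.mem_torsionBySet_iff _ _).mp hm a

variable [IsNoetherianRing R]

theorem notMem_of_isAssociatedPrime {p : Ideal R} (hp : IsAssociatedPrime p M) {x : R}
    (hx : IsSMulRegular M x) : x ∉ p := fun hxp ↦ by
  have hmem : x ∈ ⋃ p ∈ associatedPrimes R M, (p : Set R) := Set.mem_biUnion hp hxp
  rw [biUnion_associatedPrimes_eq_compl_regular] at hmem
  exact hmem hx

variable [Module.Finite R M]

theorem exists_isAssociatedPrime_ge (p : Ideal R) (hp : ∀ x ∈ p, ¬ IsSMulRegular M x) :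
    ∃ q : Ideal R, IsAssociatedPrime q M ∧ p ≤ q := by
  have hcover : (p : Set R) ⊆ ⋃ q ∈ associatedPrimes R M, (q : Set R) := by
    rw [biUnion_associatedPrimes_eq_compl_regular]
    exact hp
  exact (Ideal.subset_union_prime_finite (f := id) (associatedPrimes.finite R M) ⊥ ⊥
    fun q hq _ _ ↦ IsAssociatedPrime.isPrime hq).mp hcover

variable [IsLocalRing R]

theorem exists_isAssociatedPrime_quotSMulTop {p : Ideal R} (hp : IsAssociatedPrime p M) {x : R}
    (hxm : x ∈ maximalIdeal R) (hx : IsSMulRegular M x) :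
    ∃ q : Ideal R, IsAssociatedPrime q (QuotSMulTop x M) ∧ p ≤ q ∧ x ∈ q := by
  obtain ⟨hpp, y, hy⟩ := isAssociatedPrime_iff.mp hp
  have htors : Submodule.torsionBySet R M p ≠ ⊥ := by
    refine (Submodule.ne_bot_iff _).mpr ⟨y, (Submodule.mem_torsionBySet_iff _ _).mpr fun a ↦ ?_, ?_⟩
    · simpa [hy, Submodule.mem_colon_singleton] using a.2
    · rintro rfl
      exact hpp.ne_top (by simp [hy])
  obtain ⟨n, hn, hnx⟩ := exists_mem_torsionBySet_notMem_smul_top htors hxm hx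
  obtain ⟨q, hq, hle⟩ := exists_le_isAssociatedPrime_of_isNoetherianRing R
    (Submodule.Quotient.mk n : QuotSMulTop x M) (by rwa [Ne, Submodule.Quotient.mk_eq_zero])
  have mem_q {a : R} (ha : a • n ∈ x • (⊤ : Submodule R M)) : a ∈ q := hle <| by
    rwa [Submodule.mem_colon_singleton, Submodule.mem_bot, ← Submodule.Quotient.mk_smul,
      Submodule.Quotient.mk_eq_zero]
  refine ⟨q, hq, fun a ha ↦ mem_q ?_, mem_q (Submodule.smul_mem_pointwise_smul n x ⊤ trivial)⟩
  have han : a • n = 0 := (Submodule.mem_torsionBySet_iff _ _).mp hn ⟨a, ha⟩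
  exact han ▸ zero_mem _

theorem length_le_ringKrullDim_quotient_of_isAssociatedPrime {rs : List R}
    (mem : ∀ r ∈ rs, r ∈ maximalIdeal R) (reg : IsWeaklyRegular M rs) {p : Ideal R}
    (hp : IsAssociatedPrime p M) : (rs.length : WithBot ℕ∞) ≤ ringKrullDim (R ⧸ p) := by
  induction rs generalizing M p with
  | nil =>
    have := hp.isPrime
    simpa using ringKrullDim_nonneg_of_nontrivial (R := R ⧸ p)
  | cons x rs ih =>
    have := hp.isPrime
    obtain ⟨hxm, mem⟩ := List.forall_mem_cons.mp mem
    obtain ⟨hx, reg⟩ := (isWeaklyRegular_cons_iff M x rs).mp reg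
    obtain ⟨q, hq, hpq, hxq⟩ := exists_isAssociatedPrime_quotSMulTop hp hxm hx
    calc ((x :: rs).length : WithBot ℕ∞) = rs.length + 1 := by simp
      _ ≤ ringKrullDim (R ⧸ q) + 1 := by gcongr; exact ih mem reg hq
      _ ≤ ringKrullDim (R ⧸ p) := ringKrullDim_quotient_add_one_le_of_lt <|
        hpq.lt_of_ne fun h ↦ notMem_of_isAssociatedPrime hp hx (h ▸ hxq)

end AssociatedPrimes

section RegularSequence

variable {R : Type u} [CommRing R] {M : Type v} [AddCommGroup M] [Module R M]

theorem mem_maximalIdeal_of_isRegular [IsLocalRing R] {rs : List R} (reg : IsRegular M rs)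
    {r : R} (hr : r ∈ rs) : r ∈ maximalIdeal R := by
  have htop : Ideal.ofList rs ≠ ⊤ := fun htop ↦
    reg.top_ne_smul (by rw [htop, Submodule.top_smul])
  exact le_maximalIdeal htop (Ideal.subset_span hr)

theorem subsingleton_ext_quotSMulTop [Small.{v} R] (N : ModuleCat.{v} R) {x : R}
    (hx : IsSMulRegular M x) {i : ℕ} (h₀ : Subsingleton (Abelian.Ext N (ModuleCat.of R M) i))
    (h₁ : Subsingleton (Abelian.Ext N (ModuleCat.of R M) (i + 1))) :
    Subsingleton (Abelian.Ext N (ModuleCat.of R (QuotSMulTop x M)) i) := by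
  have hexact := Abelian.Ext.covariant_sequence_exact₃' N
    (IsSMulRegular.smulShortComplex_shortExact (M := ModuleCat.of R M) hx) i (i + 1) rfl
  exact AddCommGrpCat.subsingleton_of_isZero <| hexact.isZero_of_both_zeros
    ((AddCommGrpCat.isZero_of_iff_subsingleton.mpr h₀).eq_zero_of_src _)
    ((AddCommGrpCat.isZero_of_iff_subsingleton.mpr h₁).eq_zero_of_tgt _)

variable [IsNoetherianRing R]

theorem length_le_height_of_isWeaklyRegular {p : Ideal R} [p.IsPrime] {rs : List R}
    (mem : ∀ r ∈ rs, r ∈ p) (reg : IsWeaklyRegular R rs) : (rs.length : ℕ∞) ≤ p.height := by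
  have regp := reg.isRegular_of_isLocalization_of_mem (Localization.AtPrime p) p mem
  have hdim := ringKrullDim_add_length_eq_ringKrullDim_of_isRegular _ regp
  rw [IsLocalization.AtPrime.ringKrullDim_eq_height p (Localization.AtPrime p),
    List.length_map] at hdim
  have : Nontrivial (Localization.AtPrime p ⧸ Ideal.ofList
      (rs.map (algebraMap R (Localization.AtPrime p)))) := by
    simpa using regp.quot_ofList_smul_nontrivial ⊤
  rw [← WithBot.coe_le_coe, ← hdim]
  exact le_add_of_nonneg_left ringKrullDim_nonneg_of_nontrivial

variable [IsLocalRing R]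

theorem exists_isRegular_quotSMulTop [Small.{v} R] [Module.Finite R M]
    {rs : List R} {n : ℕ} (hlen : rs.length = n + 1) (reg : IsRegular M rs)
    {x : R} (hxm : x ∈ maximalIdeal R) (hx : IsSMulRegular M x) :
    ∃ ss : List R, ss.length = n ∧ IsRegular (QuotSMulTop x M) ss := by
  have := reg.nontrivial
  have := nontrivial_quotSMulTop_of_mem_maximalIdeal M hxm
  have smul_lt (L : Type v) [AddCommGroup L] [Module R L] [Module.Finite R L] [Nontrivial L] :
      maximalIdeal R • (⊤ : Submodule R L) < ⊤ :=
    (Submodule.top_ne_ideal_smul_of_le_jacobson_annihilator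
      (maximalIdeal_le_jacobson _)).symm.lt_top
  -- By Rees' theorem, the depth of `M` is read off from the vanishing of `Ext`.
  have ext_eq_zero := ((ModuleCat.exists_isRegular_tfae (maximalIdeal R) (n + 1)
    (ModuleCat.of R M) (smul_lt M)).out 1 3 rfl rfl).mpr
      ⟨rs, hlen, fun _ ↦ mem_maximalIdeal_of_isRegular reg, reg⟩
  obtain ⟨ss, hss, -, reg'⟩ := ((ModuleCat.exists_isRegular_tfae (maximalIdeal R) n
    (ModuleCat.of R (QuotSMulTop x M)) (smul_lt _)).out 1 3 rfl rfl).mp fun i hi ↦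
      subsingleton_ext_quotSMulTop _ hx (ext_eq_zero i (by lia)) (ext_eq_zero (i + 1) (by lia))
  exact ⟨ss, hss, reg'⟩

theorem exists_isWeaklyRegular_length_le [Small.{v} R] [Module.Finite R M] (p : Ideal R)
    [p.IsPrime] {rs : List R} (reg : IsRegular M rs) :
    ∃ ss : List R, (∀ s ∈ ss, s ∈ p) ∧ IsWeaklyRegular M ss ∧
      (rs.length : WithBot ℕ∞) ≤ ringKrullDim (R ⧸ p) + ss.length := by
  induction hn : rs.length generalizing M rs with
  | zero =>
    refine ⟨[], by simp, .nil _ _, ?_⟩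
    simpa using ringKrullDim_nonneg_of_nontrivial (R := R ⧸ p)
  | succ n ih =>
    by_cases! hx : ∃ x ∈ p, IsSMulRegular M x
    · obtain ⟨x, hxp, hx⟩ := hx
      obtain ⟨rs', hlen, reg'⟩ := exists_isRegular_quotSMulTop hn reg
        (le_maximalIdeal_of_isPrime p hxp) hx
      obtain ⟨ss, hss, wreg, hle⟩ := ih reg' hlen
      refine ⟨x :: ss, List.forall_mem_cons.mpr ⟨hxp, hss⟩, .cons hx wreg, ?_⟩
      push_cast [List.length_cons]
      rw [← add_assoc]
      gcongr
    · obtain ⟨q, hq, hpq⟩ := exists_isAssociatedPrime_ge p hx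
      refine ⟨[], by simp, .nil _ _, ?_⟩
      rw [← hn, List.length_nil, Nat.cast_zero, add_zero]
      exact (length_le_ringKrullDim_quotient_of_isAssociatedPrime
        (fun _ ↦ mem_maximalIdeal_of_isRegular reg) reg.toIsWeaklyRegular hq).trans
        (ringKrullDim_le_of_surjective _ (Ideal.Quotient.factor_surjective hpq))

theorem length_le_ringKrullDim_quotient_add_height {rs : List R} (reg : IsRegular R rs)
    (p : Ideal R) [p.IsPrime] : (rs.length : WithBot ℕ∞) ≤ ringKrullDim (R ⧸ p) + p.height := by
  obtain ⟨ss, hss, wreg, hle⟩ := exists_isWeaklyRegular_length_le p reg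
  refine hle.trans ?_
  gcongr
  exact_mod_cast length_le_height_of_isWeaklyRegular hss wreg

end RegularSequence

section RegularLocalRing

theorem exists_mem_span_insert_erase_eq {R : Type*} [CommRing R] [IsLocalRing R] {M : Type*}
    [AddCommGroup M] [Module R M] [DecidableEq M] {s : Finset M} {x : M}
    (hxs : x ∈ Submodule.span R (s : Set M))
    (hx : x ∉ maximalIdeal R • Submodule.span R (s : Set M)) :
    ∃ i ∈ s, Submodule.span R (insert x (s.erase i : Set M)) = Submodule.span R (s : Set M) := by
  obtain ⟨a, -, rfl⟩ := Submodule.mem_span_finset.mp hxs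
  obtain ⟨i, his, hai⟩ : ∃ i ∈ s, IsUnit (a i) := by
    by_contra! hcon
    exact hx (sum_mem fun i hi ↦ Submodule.smul_mem_smul (hcon i hi) (Submodule.subset_span hi))
  set L := Submodule.span R (insert (∑ j ∈ s, a j • j) (s.erase i : Set M))
  have herase (j : M) (hj : j ∈ s.erase i) : j ∈ L :=
    Submodule.subset_span (Set.mem_insert_of_mem _ (Finset.mem_coe.mpr hj))
  have hiL : i ∈ L := by
    rw [← Submodule.smul_mem_iff_of_isUnit L hai]
    have hsum : (∑ j ∈ s, a j • j) - ∑ j ∈ s.erase i, a j • j = a i • i :=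
      sub_eq_of_eq_add (Finset.add_sum_erase s _ his).symm
    rw [← hsum]
    exact sub_mem (Submodule.subset_span (Set.mem_insert _ _))
      (sum_mem fun j hj ↦ L.smul_mem _ (herase j hj))
  refine ⟨i, his, le_antisymm (Submodule.span_le.mpr (Set.insert_subset hxs ?_))
    (Submodule.span_le.mpr fun j hj ↦ ?_)⟩
  · exact fun j hj ↦ Submodule.subset_span (Finset.mem_of_mem_erase hj)
  · obtain rfl | hji := eq_or_ne j i
    · exact hiL
    · exact herase j (Finset.mem_erase.mpr ⟨hji, hj⟩)

variable {R : Type u} [CommRing R]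

theorem isLocalRing_quotient_span_singleton [IsLocalRing R] {x : R} (hx : x ∈ maximalIdeal R) :
    IsLocalRing (R ⧸ Ideal.span {x}) := by
  have : Nontrivial (R ⧸ Ideal.span {x}) := Ideal.Quotient.nontrivial_iff.mpr <|
    Ideal.span_singleton_ne_top hx
  exact .of_surjective' _ Ideal.Quotient.mk_surjective

theorem spanFinrank_maximalIdeal_quotient_add_one_le [IsNoetherianRing R] [IsLocalRing R] {x : R}
    [IsLocalRing (R ⧸ Ideal.span {x})] (hx : x ∈ maximalIdeal R)
    (hx2 : x ∉ maximalIdeal R ^ 2) :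
    (maximalIdeal (R ⧸ Ideal.span {x})).spanFinrank + 1 ≤ (maximalIdeal R).spanFinrank := by
  classical
  obtain ⟨s, hcard, hs⟩ :=
    (IsNoetherian.noetherian (maximalIdeal R)).exists_span_finset_card_eq_spanFinrank
  obtain ⟨i, his, hspan⟩ := exists_mem_span_insert_erase_eq (s := s) (hs ▸ hx)
    (by rwa [hs, smul_eq_mul, ← pow_two])
  have hmax : maximalIdeal (R ⧸ Ideal.span {x}) =
      Ideal.span (Ideal.Quotient.mk (Ideal.span {x}) '' (s.erase i)) := by
    have hx0 : Ideal.Quotient.mk (Ideal.span {x}) x = 0 :=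
      Ideal.Quotient.eq_zero_iff_mem.mpr (Ideal.mem_span_singleton_self x)
    rw [← map_maximalIdeal_of_surjective _ Ideal.Quotient.mk_surjective, ← hs, ← hspan,
      ← Ideal.span, Ideal.map_span, Set.image_insert_eq, hx0, Ideal.span_insert_zero]
  calc (maximalIdeal (R ⧸ Ideal.span {x})).spanFinrank + 1
      ≤ (Ideal.Quotient.mk (Ideal.span {x}) '' (s.erase i)).ncard + 1 := by
        rw [hmax]
        gcongr
        exact Submodule.spanFinrank_span_le_ncard_of_finite ((s.erase i).finite_toSet.image _)
    _ ≤ (s.erase i).card + 1 := by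
        gcongr
        exact (Set.ncard_image_le (s.erase i).finite_toSet).trans_eq (Set.ncard_coe_finset _)
    _ = (maximalIdeal R).spanFinrank := by rw [Finset.card_erase_add_one his, hcard]

theorem ringKrullDim_le_quotient_span_singleton_add_one [IsNoetherianRing R] [IsLocalRing R]
    {x : R} (hx : x ∈ maximalIdeal R) :
    ringKrullDim R ≤ ringKrullDim (R ⧸ Ideal.span {x}) + 1 := by
  have hle := ringKrullDim_le_ringKrullDim_quotient_add_card {x}
    (by simpa [ringJacobson_eq_maximalIdeal] using hx)
  rwa [Finset.coe_singleton, Finset.card_singleton, Nat.cast_one] at hle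

theorem isRegularLocalRing_quotient_span_singleton [IsRegularLocalRing R] {x : R}
    (hx : x ∈ maximalIdeal R) (hx2 : x ∉ maximalIdeal R ^ 2) :
    IsRegularLocalRing (R ⧸ Ideal.span {x}) := by
  have := isLocalRing_quotient_span_singleton hx
  refine .of_spanFinrank_maximalIdeal_le _ (ENat.WithBot.add_le_add_one_right_iff.mp ?_)
  calc ((maximalIdeal (R ⧸ Ideal.span {x})).spanFinrank + 1 : WithBot ℕ∞)
      ≤ (maximalIdeal R).spanFinrank :=
        mod_cast spanFinrank_maximalIdeal_quotient_add_one_le hx hx2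
    _ = ringKrullDim R := IsRegularLocalRing.spanFinrank_maximalIdeal
    _ ≤ ringKrullDim (R ⧸ Ideal.span {x}) + 1 := ringKrullDim_le_quotient_span_singleton_add_one hx

theorem exists_mem_maximalIdeal_notMem_sq [IsNoetherianRing R] [IsLocalRing R]
    (hdim : ringKrullDim R ≠ 0) :
    ∃ x ∈ maximalIdeal R, x ∉ maximalIdeal R ^ 2 ∧ ∀ q ∈ minimalPrimes R, x ∉ q := by
  by_contra! hcon
  have hcover : (maximalIdeal R : Set R) ⊆
      ⋃ q ∈ insert (maximalIdeal R ^ 2) (minimalPrimes R), (q : Set R) := fun x hx ↦ by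
    rw [Set.biUnion_insert]
    by_cases hx2 : x ∈ maximalIdeal R ^ 2
    · exact .inl hx2
    · obtain ⟨q, hq, hxq⟩ := hcon x hx hx2
      exact .inr (Set.mem_biUnion hq hxq)
  obtain ⟨q, rfl | hq, hle⟩ := (Ideal.subset_union_prime_finite (f := id)
    ((minimalPrimes.finite_of_isNoetherianRing R).insert _) (maximalIdeal R ^ 2)
    (maximalIdeal R ^ 2) fun q hq hne _ ↦ (hq.resolve_left hne).isPrime).mp hcover
  · have hbot : maximalIdeal R = ⊥ :=
      Submodule.eq_bot_of_le_smul_of_le_jacobson_bot (maximalIdeal R) _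
        (IsNoetherian.noetherian _) (by rwa [smul_eq_mul, ← pow_two])
        (jacobson_eq_maximalIdeal _ bot_ne_top).ge
    exact hdim (by rw [← maximalIdeal_height_eq_ringKrullDim, hbot, Ideal.height_bot]; rfl)
  · have := hq.isPrime
    have hqm : q = maximalIdeal R := le_antisymm (le_maximalIdeal_of_isPrime q) hle
    exact hdim (by
      rw [← maximalIdeal_height_eq_ringKrullDim, ← hqm, Ideal.height_eq_zero_iff.mpr hq]; rfl)

theorem isDomain_of_isPrime_span_singleton [IsNoetherianRing R] [IsLocalRing R] {x : R}
    (hx : x ∈ maximalIdeal R) (hxp : (Ideal.span {x}).IsPrime)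
    (hmin : ∀ q ∈ minimalPrimes R, x ∉ q) : IsDomain R := by
  obtain ⟨q, hq, hqx⟩ := Ideal.exists_minimalPrimes_le (bot_le (a := Ideal.span {x}))
  have hqp := hq.isPrime
  have hle : q ≤ Ideal.span {x} • q := fun b hb ↦ by
    obtain ⟨c, rfl⟩ := Ideal.mem_span_singleton.mp (hqx hb)
    exact Submodule.smul_mem_smul (Ideal.mem_span_singleton_self x)
      ((hqp.mem_or_mem hb).resolve_left (hmin q hq))
  have hbot : q = ⊥ := Submodule.eq_bot_of_le_smul_of_le_jacobson_bot _ q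
    (IsNoetherian.noetherian q) hle (by
      rwa [jacobson_eq_maximalIdeal _ bot_ne_top, Ideal.span_singleton_le_iff_mem])
  have : (⊥ : Ideal R).IsPrime := hbot ▸ hqp
  exact IsDomain.of_bot_isPrime R

theorem exists_isRegularLocalRing_quotient_span_singleton [IsRegularLocalRing R]
    (hdim : ringKrullDim R ≠ 0) :
    ∃ x ∈ maximalIdeal R, (∀ q ∈ minimalPrimes R, x ∉ q) ∧
      IsRegularLocalRing (R ⧸ Ideal.span {x}) ∧
      ringKrullDim (R ⧸ Ideal.span {x}) + 1 = ringKrullDim R := by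
  obtain ⟨x, hx, hx2, hmin⟩ := exists_mem_maximalIdeal_notMem_sq hdim
  have := isRegularLocalRing_quotient_span_singleton hx hx2
  refine ⟨x, hx, hmin, this, le_antisymm ?_ (ringKrullDim_le_quotient_span_singleton_add_one hx)⟩
  rw [← IsRegularLocalRing.spanFinrank_maximalIdeal, ← IsRegularLocalRing.spanFinrank_maximalIdeal]
  exact_mod_cast spanFinrank_maximalIdeal_quotient_add_one_le hx hx2

theorem isField_of_isRegularLocalRing [IsRegularLocalRing R] (hdim : ringKrullDim R = 0) :
    IsField R := by
  rw [isField_iff_maximalIdeal_eq,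
    ← Submodule.spanFinrank_eq_zero_iff_eq_bot (IsNoetherian.noetherian _)]
  exact_mod_cast IsRegularLocalRing.spanFinrank_maximalIdeal.trans hdim

theorem isDomain_of_isRegularLocalRing (R : Type*) [CommRing R] [IsRegularLocalRing R] :
    IsDomain R := by
  obtain ⟨n, hn⟩ : ∃ n : ℕ, ringKrullDim R = n :=
    ⟨_, IsRegularLocalRing.spanFinrank_maximalIdeal.symm⟩
  induction n generalizing R with
  | zero => exact (isField_of_isRegularLocalRing hn).isDomain
  | succ n ih =>
    obtain ⟨x, hx, hmin, _, hdim⟩ := exists_isRegularLocalRing_quotient_span_singleton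
      (R := R) (by rw [hn]; exact_mod_cast n.succ_ne_zero)
    have := ih (R ⧸ Ideal.span {x}) (ENat.WithBot.add_one_cancel.mp (by rw [hdim, hn]; rfl))
    exact isDomain_of_isPrime_span_singleton hx
      ((Ideal.Quotient.isDomain_iff_prime _).mp this) hmin

theorem exists_isRegular_of_quotient_span_singleton [IsLocalRing R] {x : R}
    (hx : x ∈ maximalIdeal R) (hreg : IsSMulRegular R x) {rs : List (R ⧸ Ideal.span {x})}
    (reg : IsRegular (R ⧸ Ideal.span {x}) rs) :
    ∃ ss : List R, ss.length = rs.length + 1 ∧ IsRegular R ss := by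
  have := isLocalRing_quotient_span_singleton hx
  obtain ⟨rs, rfl⟩ := List.map_surjective_iff.mpr Ideal.Quotient.mk_surjective rs
  have hmem : ∀ r ∈ x :: rs, r ∈ maximalIdeal R := List.forall_mem_cons.mpr
    ⟨hx, fun r hr hu ↦ mem_maximalIdeal_of_isRegular reg (List.mem_map_of_mem hr) (hu.map _)⟩
  have e : QuotSMulTop x R ≃ₗ[R] R ⧸ Ideal.span {x} := Submodule.quotEquivOfEq _ _
    (by rw [← Submodule.ideal_span_singleton_smul, smul_eq_mul, Ideal.mul_top])
  refine ⟨x :: rs, by simp, .of_isWeaklyRegular_of_mem_maximalIdeal R hmem (.cons hreg ?_)⟩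
  exact (e.isWeaklyRegular_congr rs).mpr
    ((isWeaklyRegular_map_algebraMap_iff (R ⧸ Ideal.span {x}) (R ⧸ Ideal.span {x}) rs).mp
      reg.toIsWeaklyRegular)

theorem exists_isRegular_length_eq_ringKrullDim (R : Type*) [CommRing R] [IsRegularLocalRing R] :
    ∃ rs : List R, rs.length = ringKrullDim R ∧ IsRegular R rs := by
  obtain ⟨n, hn⟩ : ∃ n : ℕ, ringKrullDim R = n :=
    ⟨_, IsRegularLocalRing.spanFinrank_maximalIdeal.symm⟩
  induction n generalizing R with
  | zero => exact ⟨[], by simp [hn], (isRegular_iff _ _).mpr ⟨.nil _ _, by simp⟩⟩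
  | succ n ih =>
    obtain ⟨x, hx, hmin, _, hdim⟩ := exists_isRegularLocalRing_quotient_span_singleton
      (R := R) (by rw [hn]; exact_mod_cast n.succ_ne_zero)
    obtain ⟨rs, hlen, reg⟩ :=
      ih (R ⧸ Ideal.span {x}) (ENat.WithBot.add_one_cancel.mp (by rw [hdim, hn]; rfl))
    have := isDomain_of_isRegularLocalRing R
    have hx0 : x ≠ 0 :=
      hmin ⊥ (by rw [IsDomain.minimalPrimes_eq_singleton_bot, Set.mem_singleton_iff])
    obtain ⟨ss, hss, reg'⟩ :=
      exists_isRegular_of_quotient_span_singleton hx (.of_ne_zero hx0) reg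
    exact ⟨ss, by rw [hss, ← hdim, ← hlen]; rfl, reg'⟩

theorem ringKrullDim_le_ringKrullDim_quotient_add_height [IsRegularLocalRing R] (p : Ideal R)
    [p.IsPrime] : ringKrullDim R ≤ ringKrullDim (R ⧸ p) + p.height := by
  obtain ⟨rs, hlen, reg⟩ := exists_isRegular_length_eq_ringKrullDim R
  exact hlen ▸ length_le_ringKrullDim_quotient_add_height reg p

theorem le_ringKrullDim_quotient_of_height_add_le [IsRegularLocalRing R] {p : Ideal R} [p.IsPrime]
    {k : ℕ∞} (hp : (p.height + k : ℕ∞) ≤ ringKrullDim R) : k ≤ ringKrullDim (R ⧸ p) := by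
  obtain ⟨c, hc⟩ := ENat.ne_top_iff_exists.mp (Ideal.height_ne_top_of_isPrime (I := p))
  have hle := hp.trans (ringKrullDim_le_ringKrullDim_quotient_add_height p)
  rw [← hc, add_comm (ringKrullDim _)] at hle
  exact ENat.WithBot.add_le_add_natCast_left_iff.mp hle

theorem IsRegularLocal.isRegularLocalRing {R : Type} [CommRing R] [IsLocalRing R]
    (hR : IsRegularLocal R) : IsRegularLocalRing R := by
  obtain ⟨_, s, hs, hcard⟩ := hR
  refine .of_spanFinrank_maximalIdeal_le R ?_
  rw [← hcard, ← hs, ← Set.ncard_coe_finset]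
  exact_mod_cast Submodule.spanFinrank_span_le_ncard_of_finite s.finite_toSet

theorem height_le_idealHeight {R : Type} [CommRing R] (I : Ideal R) :
    I.height ≤ idealHeight R I := by
  refine le_sInf ?_
  rintro _ ⟨P, hP, rfl⟩
  exact (Ideal.height_mono hP).trans_eq P.height_eq_orderHeight

theorem IsRegularLocal.one_lt_ringKrullDim_quotient {R : Type} [CommRing R] [IsLocalRing R]
    (hR : IsRegularLocal R) {p : Ideal R} [p.IsPrime]
    (hp : (idealHeight R p + 2 : ℕ∞) ≤ ringKrullDim R) : 1 < ringKrullDim (R ⧸ p) := by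
  have := hR.isRegularLocalRing
  have hle : p.height + 2 ≤ idealHeight R p + 2 := by gcongr; exact height_le_idealHeight p
  have hdim : ((2 : ℕ∞) : WithBot ℕ∞) ≤ ringKrullDim (R ⧸ p) :=
    le_ringKrullDim_quotient_of_height_add_le ((WithBot.coe_le_coe.mpr hle).trans hp)
  have hlt : (1 : ℕ∞) < 2 := by norm_num
  exact (WithBot.coe_lt_coe.mpr hlt).trans_le hdim

end RegularLocalRing

theorem stmt13_general {R : Type u} [CommRing R] [IsNoetherianRing R] {p : Ideal R} [p.IsPrime]
    (hp : 1 < ringKrullDim (R ⧸ p)) {h : R} (hh : h ∉ p) {E : Type v} [AddCommGroup E] [Module R E]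
    [Small.{v} R] [Module.Injective R E] {f : (R ⧸ p) →ₗ[R] E} (hf : Function.Injective f) :
    ¬ Module.Finite (Localization (Submonoid.powers h))
        (LocalizedModule (Submonoid.powers h) ((R ⧸ p) →ₗ[R] E)) := by
  obtain ⟨q, hq, hpq, hhq⟩ := exists_isPrime_gt_notMem hp hh
  exact not_finite_localizedModule_linearMap_of_lt hpq
    ((Ideal.disjoint_powers_iff_notMem h hq.isRadical).mpr hhq) hf

/-- Regular local ring `R` of dimension `n`, `p` a prime of height
`≤ n - 2` (i.e. `ht p + 2 ≤ n`), `h ∉ p`.  Then `Hom_R(R/p, E_R(R/p))_h` is not a finitely generated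
`R_h`-module. -/
theorem stmt13 (R : Type) [CommRing R] [IsLocalRing R]
    (hreg : IsRegularLocal R)
    (n : ℕ) (hdim : ringKrullDim R = (n : WithBot ℕ∞))
    (p : Ideal R) [p.IsPrime] (hp : idealHeight R p + 2 ≤ (n : ℕ∞))
    (h : R) (hh : h ∉ p)
    (E : Type) [AddCommGroup E] [Module R E]
    (f : (R ⧸ p) →ₗ[R] E) (hf : IsInjectiveHull R f) :
    ¬ Module.Finite (Localization (Submonoid.powers h))
        (LocalizedModule (Submonoid.powers h) ((R ⧸ p) →ₗ[R] E)) := by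
  have := hreg.1
  have := hf.1
  exact stmt13_general (hreg.one_lt_ringKrullDim_quotient (by rw [hdim]; exact_mod_cast hp)) hh
    hf.2.1
end

section
/- Let R be a commutative Noetherian ring, let M be an R-module with inj.dim_R(M) = c < ∞, and let p be a prime ideal of R. Suppose the set of associated primes of H_p^c(M) is the finite set {p, q_1, …, q_m}, where p is strictly contained in q_i for each i. Set J = q_1 ⋯ q_m. Then the natural localization map H_p^c(M) → (H_p^c(M))_p induces an isomorphism H_p^c(M) / Γ_J(H_p^c(M)) ≅ (H_p^c(M))_p. -/
open CategoryTheory Opposite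

noncomputable section

/-!
Let `c = inj.dim M`. For a Noetherian module `X` and `s : R`, multiplication by `s` is injective
on `Z = s ^ k X` for large `k`. As `Ext^{c+1}(-, M) = 0`, the functor `Ext^c(-, M)` turns the
monomorphism `s : Z ⟶ X` into a surjection, and factoring `s ^ k : X ⟶ X` through `Z` shows that
every `x` in `Ext^c(X, M)` satisfies `s ^ k x = s ^ (k + 1) y` for some `y`. This property passes
from the modules `X = R ⧸ I ^ t` to the filtered colimit `H_I^c(M)`, and it gives `x / s = y` in
any localization inverting `s`, so every localization map out of `H_I^c(M)` is surjective. An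
element `x` killed by some `s ∉ p` generates a submodule whose associated primes all contain `s`,
hence are among the `q_i`, so a power of `J` kills `x`; conversely no power of `J` is contained in
`p`.
-/

universe w v u

section Comparison

variable {R : Type*} [Ring R] {C : Type u} [Category.{v} C] [Abelian C] [Linear R C]
  {X Y : C} {n : ℕ}

variable (R) in
/-- The `n`-cocycles of `Hom(P, Y)`, regarded as morphisms `P.complex.X n ⟶ Y`. -/
def cocycleHom (P : ProjectiveResolution X) (Y : C) (n : ℕ) :
    (P.complex.linearYonedaObj R Y).cycles n →ₗ[R] (P.complex.X n ⟶ Y) :=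
  ((P.complex.linearYonedaObj R Y).iCycles n).hom

lemma d_comp_cocycleHom (P : ProjectiveResolution X)
    (z : (P.complex.linearYonedaObj R Y).cycles n) :
    P.complex.d (n + 1) n ≫ cocycleHom R P Y n z = 0 :=
  congr($((P.complex.linearYonedaObj R Y).iCycles_d n (n + 1)).hom z)

lemma exists_cocycleHom_eq (P : ProjectiveResolution X) (f : P.complex.X n ⟶ Y)
    (hf : P.complex.d (n + 1) n ≫ f = 0) : ∃ z, cocycleHom R P Y n z = f :=
  ⟨_, (P.complex.linearYonedaObj R Y).i_cyclesMk (C := ModuleCat R) f (n + 1) (by simp) hf⟩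

lemma homologyπ_eq_zero_iff {ι : Type*} {c : ComplexShape ι}
    (K : HomologicalComplex (ModuleCat R) c) (i : ι) (z : K.cycles i) :
    K.homologyπ i z = 0 ↔ ∃ g, K.d (c.prev i) i g = K.iCycles i z := by
  have hπι : K.homologyι i (K.homologyπ i z) = K.pOpcycles i (K.iCycles i z) :=
    congr($(K.homology_π_ι i).hom z)
  have hι : Function.Injective (K.homologyι i) := (ModuleCat.mono_iff_injective _).1 inferInstance
  rw [← map_eq_zero_iff _ hι, hπι]
  exact (K.sc i).moduleCat_pOpcycles_eq_zero_iff _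

variable [HasExt.{w} C]

lemma smul_extMk (P : ProjectiveResolution X) (r : R) (f : P.complex.X n ⟶ Y)
    (hf : P.complex.d (n + 1) n ≫ f = 0) :
    r • P.extMk f (n + 1) rfl hf = P.extMk (r • f) (n + 1) rfl (by simp [hf]) := by
  simp [Abelian.Ext.smul_eq_comp_mk₀, ProjectiveResolution.extMk_comp_mk₀]

lemma extMk_zero_eq_zero_iff (P : ProjectiveResolution X) (f : P.complex.X 0 ⟶ Y)
    (hf : P.complex.d 1 0 ≫ f = 0) : P.extMk f 1 rfl hf = 0 ↔ f = 0 := by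
  have hd : P.cochainComplex.d (-((0 : ℕ) : ℤ)) 1 = 0 :=
    (P.cochainComplex.isZero_of_isStrictlyLE 0 1).eq_of_tgt _ _
  rw [← P.extEquivCohomologyClass.apply_eq_iff_eq,
    ProjectiveResolution.extEquivCohomologyClass_extMk,
    ProjectiveResolution.extEquivCohomologyClass_zero,
    CochainComplex.HomComplex.CohomologyClass.mk_eq_zero_iff,
    CochainComplex.HomComplex.Cocycle.toSingleMk_mem_coboundaries_iff _ _ _ _ _ 1 (by simp), hd]
  simp [eq_comm (a := (0 : _ ⟶ _))]

lemma extMk_eq_zero_iff_exists_prev (P : ProjectiveResolution X) (f : P.complex.X n ⟶ Y)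
    (hf : P.complex.d (n + 1) n ≫ f = 0) :
    P.extMk f (n + 1) rfl hf = 0 ↔
      ∃ g : P.complex.X ((ComplexShape.up ℕ).prev n) ⟶ Y,
        P.complex.d n ((ComplexShape.up ℕ).prev n) ≫ g = f := by
  cases n with
  | succ n => exact P.extMk_eq_zero_iff f _ rfl hf _ (by simp)
  | zero => simp [extMk_zero_eq_zero_iff P f hf, eq_comm (b := f)]

variable (R) in
/-- The map sending a cocycle of `Hom(P, Y)` to its class in `Ext X Y n`; it computes `Ext` as the
cohomology of `Hom(P, Y)`. -/
def cyclesToExt (P : ProjectiveResolution X) (Y : C) (n : ℕ) :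
    (P.complex.linearYonedaObj R Y).cycles n →ₗ[R] Abelian.Ext X Y n where
  toFun z := P.extMk (cocycleHom R P Y n z) (n + 1) rfl (d_comp_cocycleHom P z)
  map_add' z z' := by
    simp only [map_add, P.add_extMk _ _ _ _ (d_comp_cocycleHom P z) (d_comp_cocycleHom P z')]
  map_smul' r z := by
    simp only [map_smul, smul_extMk P r _ (d_comp_cocycleHom P z), RingHom.id_apply]

lemma cyclesToExt_surjective (P : ProjectiveResolution X) :
    Function.Surjective (cyclesToExt R P Y n) := by
  intro α
  obtain ⟨f, hf, rfl⟩ := P.extMk_surjective α _ rfl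
  obtain ⟨z, rfl⟩ := exists_cocycleHom_eq (R := R) P f hf
  exact ⟨z, rfl⟩

lemma ker_cyclesToExt (P : ProjectiveResolution X) :
    LinearMap.ker (cyclesToExt R P Y n) =
      LinearMap.ker ((P.complex.linearYonedaObj R Y).homologyπ n).hom := by
  ext z
  exact (extMk_eq_zero_iff_exists_prev P _ (d_comp_cocycleHom P z)).trans
    (homologyπ_eq_zero_iff _ n z).symm

variable (R) in
/-- The cohomology of `Hom(P, Y)` is `Ext X Y n`: both are quotients of the cocycles by the
coboundaries. -/
def homologyLinearEquivExt (P : ProjectiveResolution X) (Y : C) (n : ℕ) :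
    (P.complex.linearYonedaObj R Y).homology n ≃ₗ[R] Abelian.Ext X Y n :=
  (LinearMap.quotKerEquivOfSurjective _
      ((ModuleCat.epi_iff_surjective _).1 inferInstance)).symm ≪≫ₗ
    Submodule.quotEquivOfEq _ _ (ker_cyclesToExt P).symm ≪≫ₗ
    LinearMap.quotKerEquivOfSurjective _ (cyclesToExt_surjective P)

variable (R) in
/-- The comparison between the two versions of `Ext` in Mathlib: `Ext`, built from left derived
functors and used in the definition of local cohomology, and `Abelian.Ext`, which carries the
long exact sequences. -/
def extLinearEquiv [EnoughProjectives C] (X Y : C) (n : ℕ) :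
    ((Ext R C n).obj (op X)).obj Y ≃ₗ[R] Abelian.Ext X Y n :=
  ((projectiveResolution X).isoExt n Y).toLinearEquiv ≪≫ₗ
    homologyLinearEquivExt R (projectiveResolution X) Y n

end Comparison

lemma ext_mk₀_comp_surjective {C : Type u} [Category.{v} C] [Abelian C] [HasExt.{w} C]
    {X X' Y : C} {n : ℕ} (g : X' ⟶ X) [Mono g] [HasInjectiveDimensionLE Y n] :
    Function.Surjective fun α : Abelian.Ext X Y n ↦ (Abelian.Ext.mk₀ g).comp α (zero_add n) := by
  have hS : (ShortComplex.mk g (Limits.cokernel.π g) (Limits.cokernel.condition g)).ShortExact :=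
    { exact := ShortComplex.exact_of_g_is_cokernel _ (Limits.cokernelIsCokernel g) }
  exact fun β ↦ Abelian.Ext.contravariant_sequence_exact₁ hS Y β (add_comm 1 n)
    (Abelian.Ext.eq_zero_of_hasInjectiveDimensionLT _ (n + 1) le_rfl)

/-- `H` is divisible modulo torsion if, for every `s : R`, multiplication by `s` is surjective on
the quotient of `H` by its `s`-power torsion; the definition spells this out in `H` itself. -/
def IsDivisibleModTorsion (R H : Type*) [CommRing R] [AddCommGroup H] [Module R H] : Prop :=
  ∀ (s : R) (x : H), ∃ (k : ℕ) (y : H), s ^ k • x = s ^ (k + 1) • y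

namespace IsDivisibleModTorsion

variable {R : Type*} [CommRing R]

lemma of_linearEquiv {H H' : Type*} [AddCommGroup H] [Module R H] [AddCommGroup H'] [Module R H']
    (e : H ≃ₗ[R] H') (hH : IsDivisibleModTorsion R H) : IsDivisibleModTorsion R H' := by
  intro s x
  obtain ⟨k, y, hy⟩ := hH s (e.symm x)
  exact ⟨k, e y, by rw [← map_smul, ← hy, map_smul, e.apply_symm_apply]⟩

lemma of_isColimit {J : Type*} [Category J] {F : J ⥤ ModuleCat.{w} R}
    {c : Limits.Cocone F} (hc : Limits.IsColimit c)
    [Limits.PreservesColimit F (forget (ModuleCat.{w} R))]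
    (hF : ∀ j, IsDivisibleModTorsion R (F.obj j)) : IsDivisibleModTorsion R c.pt := by
  intro s x
  obtain ⟨j, z, rfl⟩ := Limits.Concrete.isColimit_exists_rep F hc x
  obtain ⟨k, y, hy⟩ := hF j s z
  exact ⟨k, c.ι.app j y, by rw [← map_smul, hy, map_smul]⟩

lemma surjective_of_isLocalizedModule {H H' : Type*} [AddCommGroup H] [Module R H]
    [AddCommGroup H'] [Module R H'] (hH : IsDivisibleModTorsion R H) (S : Submonoid R)
    (f : H →ₗ[R] H') [IsLocalizedModule S f] : Function.Surjective f := by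
  intro z
  obtain ⟨⟨x, s⟩, hs⟩ := IsLocalizedModule.surj S f z
  obtain ⟨k, y, hy⟩ := hH s x
  refine ⟨y, IsLocalizedModule.smul_injective f (s ^ (k + 1)) ?_⟩
  calc
    (s : R) ^ (k + 1) • f y = (s : R) ^ k • f x := by rw [← map_smul, ← hy, map_smul]
    _ = (s : R) ^ (k + 1) • z := by rw [← hs, pow_succ, mul_smul, Submonoid.smul_def]

end IsDivisibleModTorsion

lemma exists_injOn_smul_range_lsmul_pow {R X : Type*} [CommRing R] [AddCommGroup X] [Module R X]
    [IsNoetherian R X] (s : R) :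
    ∃ k : ℕ, Set.InjOn (s • · : X → X) (LinearMap.range (Algebra.lsmul R R X (s ^ k))) := by
  obtain ⟨k, hdisj, hk⟩ := ((Module.End.eventually_disjoint_ker_pow_range_pow
    (Algebra.lsmul R R X s)).and (Filter.eventually_ge_atTop 1)).exists
  have hker : LinearMap.ker (Algebra.lsmul R R X s) ≤ LinearMap.ker (Algebra.lsmul R R X s ^ k) :=
    fun _ hx ↦ Module.End.pow_map_zero_of_le hk (by simpa using hx)
  refine ⟨k, (LinearMap.disjoint_ker_iff_injOn (f := Algebra.lsmul R R X s)).1 ?_⟩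
  rw [map_pow]
  exact (hdisj.mono_left hker).symm

lemma isDivisibleModTorsion_ext {R : Type u} [CommRing R] {X Y : ModuleCat.{v} R} {n : ℕ}
    [HasExt.{w} (ModuleCat.{v} R)] [IsNoetherian R X]
    [HasInjectiveDimensionLE Y n] : IsDivisibleModTorsion R (Abelian.Ext X Y n) := by
  intro s x
  obtain ⟨k, hk⟩ := exists_injOn_smul_range_lsmul_pow (X := X) s
  let L := Algebra.lsmul R R X (s ^ k)
  let π : X ⟶ ModuleCat.of R (LinearMap.range L) := ModuleCat.ofHom L.rangeRestrict
  let ι : ModuleCat.of R (LinearMap.range L) ⟶ X := ModuleCat.ofHom (LinearMap.range L).subtype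
  have hπι : π ≫ ι = s ^ k • 𝟙 X := rfl
  have : Mono (s • ι) := by
    rw [ModuleCat.mono_iff_injective]
    exact fun z z' h ↦ Subtype.ext (hk z.2 z'.2 h)
  obtain ⟨y, hy⟩ := ext_mk₀_comp_surjective (s • ι) ((Abelian.Ext.mk₀ ι).comp x (zero_add n))
  have hpow (α : Abelian.Ext X Y n) : s ^ k • α =
      (Abelian.Ext.mk₀ π).comp ((Abelian.Ext.mk₀ ι).comp α (zero_add n)) (zero_add n) := by
    rw [Abelian.Ext.mk₀_comp_mk₀_assoc, hπι, Abelian.Ext.mk₀_smul, Abelian.Ext.smul_comp,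
      Abelian.Ext.mk₀_id_comp]
  refine ⟨k, y, ?_⟩
  rw [hpow x, ← hy, pow_succ', mul_smul, hpow y]
  simp [Abelian.Ext.mk₀_smul]

section LocalCohomology

variable {R : Type} [CommRing R] {M : Type} [AddCommGroup M] [Module R M] {n : ℕ}

lemma injDimLE_of_injDim_eq (h : injDim R M = n) : injDimLE R M n := by
  have hne : {n : ℕ∞ | ∃ m : ℕ, (m : ℕ∞) = n ∧ injDimLE R M m}.Nonempty := by
    by_contra! hempty
    rw [injDim, hempty, sInf_empty] at h
    exact ENat.top_ne_natCast n h
  obtain ⟨m, hm, hm'⟩ := csInf_mem hne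
  exact Nat.cast_inj.1 (hm.trans h) ▸ hm'

lemma hasInjectiveDimensionLE_of_injDimLE (h : injDimLE R M n) :
    HasInjectiveDimensionLE (ModuleCat.of R M) n := by
  rw [HasInjectiveDimensionLE, hasInjectiveDimensionLT_iff.{0}]
  intro i hi N e
  have := h N i hi
  exact (extLinearEquiv R N (ModuleCat.of R M) i).symm.subsingleton.elim e 0

lemma isDivisibleModTorsion_localCohomology [IsNoetherianRing R] (h : injDimLE R M n)
    (I : Ideal R) :
    IsDivisibleModTorsion R ((localCohomology I n).obj (ModuleCat.of R M)) := by
  have := hasInjectiveDimensionLE_of_injDimLE h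
  let D := localCohomology.diagram (localCohomology.idealPowersDiagram I) n
  have := localCohomology.hasColimitDiagram.{0, 0} (localCohomology.idealPowersDiagram I) n
  refine .of_isColimit (Limits.isColimitOfPreserves
    ((evaluation _ _).obj (ModuleCat.of R M)) (Limits.colimit.isColimit D)) fun t ↦ ?_
  let X := (localCohomology.ringModIdeals (localCohomology.idealPowersDiagram I)).obj t.unop
  have : IsNoetherian R X := inferInstanceAs (IsNoetherian R (R ⧸ I ^ unop (unop t)))
  exact .of_linearEquiv (extLinearEquiv R X (ModuleCat.of R M) n).symm
    isDivisibleModTorsion_ext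

end LocalCohomology

section Kernel

lemma prod_le_radical_annihilator {R H : Type*} [CommRing R] [IsNoetherianRing R] [AddCommGroup H]
    [Module R H] {p : Ideal R} {Q : Finset (Ideal R)}
    (hAss : associatedPrimes R H ⊆ insert p (↑Q : Set (Ideal R))) {s : R} {x : H} (hs : s ∉ p)
    (hsx : s • x = 0) : ∏ q ∈ Q, q ≤ (Submodule.span R {x}).annihilator.radical := by
  rw [← Ideal.sInf_minimalPrimes]
  refine le_sInf fun q hq ↦ ?_
  have hqH : q ∈ associatedPrimes R H :=
    associatedPrimes.subset_of_injective (Submodule.span R {x}).injective_subtype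
      (Module.associatedPrimes.minimalPrimes_annihilator_subset_associatedPrimes R _ hq)
  have hqs : s ∈ q := hq.1.2 ((Submodule.mem_annihilator_span_singleton x s).2 hsx)
  obtain rfl | hqQ := hAss hqH
  · exact absurd hqs hs
  · exact Ideal.prod_le_inf.trans (Finset.inf_le hqQ)

variable {R : Type} [CommRing R] {H : Type} [AddCommGroup H] [Module R H]

lemma mem_torsionSubmodule_iff {J : Ideal R} {x : H} :
    x ∈ torsionSubmodule R J H ↔ ∃ k : ℕ, J ^ k ≤ (Submodule.span R {x}).annihilator := by
  have hdir : Directed (· ≤ ·) fun k : ℕ ↦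
      Submodule.torsionBySet R H ((J ^ k : Ideal R) : Set R) :=
    Monotone.directed_le fun _ _ hkl ↦
      Submodule.torsionBySet_le_torsionBySet_of_subset (Ideal.pow_le_pow_right hkl)
  simp [torsionSubmodule, Submodule.mem_iSup_of_directed _ hdir, SetLike.le_def]

lemma ker_eq_torsionSubmodule [IsNoetherianRing R] {H' : Type*} [AddCommGroup H'] [Module R H']
    {p : Ideal R} [p.IsPrime] (f : H →ₗ[R] H') [IsLocalizedModule p.primeCompl f]
    {Q : Finset (Ideal R)} (hAss : associatedPrimes R H ⊆ insert p (↑Q : Set (Ideal R)))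
    (hQ : ∀ q ∈ Q, ¬ q ≤ p) :
    LinearMap.ker f = torsionSubmodule R (∏ q ∈ Q, q) H := by
  ext x
  rw [LinearMap.mem_ker, IsLocalizedModule.eq_zero_iff p.primeCompl, mem_torsionSubmodule_iff]
  constructor
  · rintro ⟨s, hsx⟩
    exact Ideal.exists_pow_le_of_le_radical_of_fg (prod_le_radical_annihilator hAss s.2 hsx)
      (IsNoetherian.noetherian _)
  · rintro ⟨k, hk⟩
    have hJ : ¬ (∏ q ∈ Q, q) ^ k ≤ p := fun hle ↦ by
      obtain ⟨q, hq, hqp⟩ := (Ideal.IsPrime.prod_le ‹_›).1 (Ideal.IsPrime.le_of_pow_le hle)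
      exact hQ q hq hqp
    obtain ⟨s, hs, hsp⟩ := SetLike.not_le_iff_exists.1 hJ
    exact ⟨⟨s, hsp⟩, (Submodule.mem_annihilator_span_singleton x s).1 (hk hs)⟩

end Kernel

theorem stmt14_general {R : Type} [CommRing R] [IsNoetherianRing R]
    {M : Type} [AddCommGroup M] [Module R M] {c : ℕ} (hinj : injDimLE R M c)
    (I p : Ideal R) [p.IsPrime] (Q : Finset (Ideal R))
    (hAss : associatedPrimes R ((localCohomology I c).obj (ModuleCat.of R M))
      ⊆ insert p (↑Q : Set (Ideal R)))
    (hQ : ∀ q ∈ Q, ¬ q ≤ p) :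
    Function.Surjective
        (LocalizedModule.mkLinearMap p.primeCompl
          ((localCohomology I c).obj (ModuleCat.of R M))) ∧
      LinearMap.ker
          (LocalizedModule.mkLinearMap p.primeCompl
            ((localCohomology I c).obj (ModuleCat.of R M))) =
        torsionSubmodule R (∏ q ∈ Q, q)
          ((localCohomology I c).obj (ModuleCat.of R M)) :=
  ⟨(isDivisibleModTorsion_localCohomology hinj I).surjective_of_isLocalizedModule p.primeCompl _,
    ker_eq_torsionSubmodule _ hAss hQ⟩

/-- `R` Noetherian, `M` with `inj.dim_R M = c < ∞`, `p` prime,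
`Ass_R H_p^c(M) = {p, q_1, …, q_m}` with `p ⊊ q_i`, `J = q_1 ⋯ q_m`.  Then the natural
localization map induces an isomorphism `H_p^c(M)/Γ_J(H_p^c(M)) ≅ (H_p^c(M))_p`;
i.e. the localization map is surjective with kernel `Γ_J(H_p^c(M))`. -/
theorem stmt14 (R : Type) [CommRing R] [IsNoetherianRing R]
    (M : Type) [AddCommGroup M] [Module R M] (c : ℕ)
    (hinj : injDim R M = (c : ℕ∞))
    (p : Ideal R) [p.IsPrime] (Q : Finset (Ideal R))
    (hAss : associatedPrimes R ((localCohomology p c).obj (ModuleCat.of R M))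
      = insert p (↑Q : Set (Ideal R)))
    (hQ : ∀ q ∈ Q, p < q) :
    Function.Surjective
        (LocalizedModule.mkLinearMap p.primeCompl
          ((localCohomology p c).obj (ModuleCat.of R M))) ∧
      LinearMap.ker
          (LocalizedModule.mkLinearMap p.primeCompl
            ((localCohomology p c).obj (ModuleCat.of R M))) =
        torsionSubmodule R (∏ q ∈ Q, q)
          ((localCohomology p c).obj (ModuleCat.of R M)) :=
  stmt14_general (injDimLE_of_injDim_eq hinj) p p Q hAss.subset fun q hq ↦ (hQ q hq).not_ge

end
end
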